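/- Let ρ : Fin r → Equiv.Perm (Fin n) be a string C-group in the two-blocks setup with r = n/2 and n/2 ≥ 7. If R = ∅, then G is isomorphic as a group to Equiv.Perm (Fin 2) × Equiv.Perm (Fin (n/2)) (i.e. G ≅ C₂ × Sym_{n/2}), and, up to duality, the Schläfli symbol of Γ is {2, 3, …, 3}: either orderOf (ρ 0 * ρ 1) = 2 and orderOf (ρ i * ρ (i+1)) = 3 for all i with 1 ≤ i ≤ r − 2, or orderOf (ρ (r−2) * ρ (r−1)) = 2 and orderOf (ρ i * ρ (i+1)) = 3 for all i with 0 ≤ i ≤ r − 3. -/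

import Mathlib

/-- A string group generated by involutions (sggi): each generator has order 2 and
nonconsecutive generators commute. -/
def IsSggi {n r : ℕ} (ρ : Fin r → Equiv.Perm (Fin n)) : Prop :=
  (∀ i, orderOf (ρ i) = 2) ∧
  ∀ i j : Fin r, 1 < |((i : ℕ) : ℤ) - ((j : ℕ) : ℤ)| → (ρ i * ρ j) ^ 2 = 1

/-- A string C-group: an sggi satisfying the intersection property. -/
def IsStringC {n r : ℕ} (ρ : Fin r → Equiv.Perm (Fin n)) : Prop :=
  IsSggi ρ ∧ ∀ J K : Set (Fin r),
    Subgroup.closure (ρ '' J) ⊓ Subgroup.closure (ρ '' K) =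
      Subgroup.closure (ρ '' (J ∩ K))

/-
The generator `ρ i₀` is a central involution, and an element of the group that preserves each of its
orbits permutes two blocks and hence is `1` or `ρ i₀`. By the intersection property, `ρ i₀` is not
generated by the other `r - 1` generators. These therefore act faithfully on the set `Q` of its
orbits, as a transitive string family without redundancy whose length is one less than the number
`r` of points. The heart of the matter is that such a family consists of the adjacent transpositions
of a path through all points; then it generates `Sym Q`, and `ρ i₀` stands at an end of the sequence
because its neighbours commute.

Descending along a central involution, that is, passing to its orbits and discarding the generators
that become redundant, gives by induction a bound: the length of a string family without redundancy
plus the number of colors of an invariant coloring is at most the number of points. A descent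
in which the bound is lost by as little as possible has a fixed fiber, by a parity count. Applied to
the generators from the third one on and their descent along the first one, this shows that the
first generator is a transposition. Applied to colorings that single out fixed points, the bound
lets the path grow edge by edge.
-/

namespace Sggi

open Equiv

/-! ### Irredundant families -/

section Gen

variable {ι Γ : Type*} [Group Γ] {σ : ι → Γ} {A B : Finset ι}

/-- The subgroup generated by the members of the family `σ` with index in `A`. -/
def gen (σ : ι → Γ) (A : Finset ι) : Subgroup Γ :=
  Subgroup.closure (σ '' A)

theorem mem_gen {i : ι} (h : i ∈ A) : σ i ∈ gen σ A :=
  Subgroup.subset_closure ⟨i, h, rfl⟩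

theorem gen_le {H : Subgroup Γ} (h : ∀ i ∈ A, σ i ∈ H) : gen σ A ≤ H := by
  rw [gen, Subgroup.closure_le]
  rintro _ ⟨i, hi, rfl⟩
  exact h i hi

theorem gen_mono (h : A ⊆ B) : gen σ A ≤ gen σ B :=
  gen_le fun _ hi => mem_gen (h hi)

theorem map_gen {Δ : Type*} [Group Δ] (f : Γ →* Δ) : (gen σ A).map f = gen (f ∘ σ) A := by
  rw [gen, MonoidHom.map_closure, gen, Set.image_comp]

theorem commute_of_mem_gen {z g : Γ} (h : ∀ i ∈ A, Commute (σ i) z) (hg : g ∈ gen σ A) :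
    Commute g z :=
  Subgroup.mem_centralizer_singleton_iff.1 <|
    gen_le (fun i hi => Subgroup.mem_centralizer_singleton_iff.2 (h i hi)) hg

end Gen

section Card

variable {Γ : Type*} [Group Γ] [Finite Γ]

theorem two_mul_card_le_of_lt {H K : Subgroup Γ} (h : H < K) : 2 * Nat.card H ≤ Nat.card K := by
  obtain ⟨c, hc⟩ := Subgroup.card_dvd_of_le h.le
  have hlt : Nat.card H < Nat.card K :=
    lt_of_not_ge fun hle => h.ne (Subgroup.eq_of_le_of_card_ge h.le hle)
  have hc1 : 1 < c := Nat.lt_of_mul_lt_mul_left (a := Nat.card H) (by rwa [mul_one, ← hc])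
  rw [hc, mul_comm]
  exact Nat.mul_le_mul_left _ hc1

theorem mul_mem_iff_of_two_mul_card_eq {H K : Subgroup Γ} (hHK : H ≤ K)
    (hcard : 2 * Nat.card H = Nat.card K) {u v : Γ} (hu : u ∈ K) (hv : v ∈ K) :
    u * v ∈ H ↔ (u ∈ H ↔ v ∈ H) := by
  have hindex : (H.subgroupOf K).index = 2 := by
    have := Subgroup.card_mul_index (H.subgroupOf K)
    rw [Nat.card_congr (Subgroup.subgroupOfEquivOfLe hHK).toEquiv, ← hcard, mul_comm 2] at this
    exact Nat.eq_of_mul_eq_mul_left Nat.card_pos this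
  simpa [Subgroup.mem_subgroupOf] using
    Subgroup.mul_mem_iff_of_index_two hindex (a := ⟨u, hu⟩) (b := ⟨v, hv⟩)

theorem card_mul_two_pow_le {ι : Type*} [DecidableEq ι] {F : Finset ι → Subgroup Γ}
    {A B : Finset ι} (hAB : A ⊆ B)
    (hF : ∀ C, A ⊆ C → C ⊆ B → ∀ b ∈ B, b ∉ C → F C < F (insert b C)) :
    Nat.card (F A) * 2 ^ (B.card - A.card) ≤ Nat.card (F B) := by
  suffices H : ∀ D : Finset ι, Disjoint D A → D ⊆ B →
      Nat.card (F A) * 2 ^ D.card ≤ Nat.card (F (D ∪ A)) by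
    have := H (B \ A) Finset.sdiff_disjoint Finset.sdiff_subset
    rwa [Finset.sdiff_union_of_subset hAB, Finset.card_sdiff_of_subset hAB] at this
  intro D
  induction D using Finset.induction_on with
  | empty => simp
  | insert b D hb ih =>
    intro hd hDB
    rw [Finset.disjoint_insert_left] at hd
    rw [Finset.insert_subset_iff] at hDB
    have hlt := hF (D ∪ A) Finset.subset_union_right (Finset.union_subset hDB.2 hAB) b hDB.1
      (by simp [hb, hd.1])
    rw [Finset.card_insert_of_notMem hb, pow_succ, ← mul_assoc, mul_comm, Finset.insert_union]
    exact (Nat.mul_le_mul_left 2 (ih hd.2 hDB.2)).trans (two_mul_card_le_of_lt hlt)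

end Card

/-- A string family of involutions without redundancy: the members of `σ` with
index in `S` square to one, commute when their indices are not consecutive, and none of them is
generated by the others. -/
structure Irredundant {Γ : Type*} [Group Γ] (σ : ℕ → Γ) (S : Finset ℕ) : Prop where
  mul_self : ∀ i ∈ S, σ i * σ i = 1
  comm : ∀ i ∈ S, ∀ j ∈ S, i + 2 ≤ j → Commute (σ i) (σ j)
  irred : ∀ i ∈ S, σ i ∉ gen σ (S.erase i)

section Irredundant

variable {Γ : Type*} [Group Γ] {σ : ℕ → Γ} {A S : Finset ℕ}

theorem Irredundant.mono (h : Irredundant σ S) (hA : A ⊆ S) : Irredundant σ A where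
  mul_self i hi := h.mul_self i (hA hi)
  comm i hi j hj := h.comm i (hA hi) j (hA hj)
  irred i hi hmem := h.irred i (hA hi) (gen_mono (Finset.erase_subset_erase i hA) hmem)

theorem Irredundant.notMem_gen (h : Irredundant σ S) (hA : A ⊆ S) {i : ℕ} (hi : i ∈ S)
    (hiA : i ∉ A) : σ i ∉ gen σ A := fun hmem =>
  have hsub : A ⊆ S.erase i := fun _ hj => Finset.mem_erase.2 ⟨ne_of_mem_of_not_mem hj hiA, hA hj⟩
  h.irred i hi (gen_mono hsub hmem)

theorem Irredundant.ne_one (h : Irredundant σ S) {i : ℕ} (hi : i ∈ S) : σ i ≠ 1 :=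
  fun h1 => h.irred i hi (h1 ▸ one_mem _)

theorem Irredundant.involutive {X : Type*} {σ : ℕ → Perm X} (h : Irredundant σ S) {i : ℕ}
    (hi : i ∈ S) : Function.Involutive (σ i) := fun x => by
  rw [← Perm.mul_apply, h.mul_self i hi, Perm.one_apply]

theorem Irredundant.gen_lt_gen_insert (h : Irredundant σ S) (hA : A ⊆ S) {i : ℕ} (hi : i ∈ S)
    (hiA : i ∉ A) : gen σ A < gen σ (insert i A) :=
  (gen_mono (Finset.subset_insert i A)).lt_of_not_ge fun hle =>
    h.notMem_gen hA hi hiA (hle (mem_gen (Finset.mem_insert_self i A)))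

theorem Irredundant.card_gen_mul_le [Finite Γ] (h : Irredundant σ S) (hA : A ⊆ S) :
    Nat.card (gen σ A) * 2 ^ (S.card - A.card) ≤ Nat.card (gen σ S) :=
  card_mul_two_pow_le hA fun _ _ hC _ hb hbC => h.gen_lt_gen_insert hC hb hbC

theorem exists_irredundant_subset (hsq : ∀ i ∈ S, σ i * σ i = 1)
    (hcomm : ∀ i ∈ S, ∀ j ∈ S, i + 2 ≤ j → Commute (σ i) (σ j)) :
    ∃ T ⊆ S, Irredundant σ T ∧ ∀ i ∈ S, σ i ∈ gen σ T := by
  induction S using Finset.strongInduction with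
  | H S ih =>
    by_cases h : ∀ i ∈ S, σ i ∉ gen σ (S.erase i)
    · exact ⟨S, subset_rfl, ⟨hsq, hcomm, h⟩, fun i hi => mem_gen hi⟩
    · push Not at h
      obtain ⟨i, hi, hmem⟩ := h
      have hss := Finset.erase_subset i S
      obtain ⟨T, hT, hirr, hgen⟩ := ih (S.erase i) (Finset.erase_ssubset hi)
        (fun j hj => hsq j (hss hj)) (fun j hj k hk => hcomm j (hss hj) k (hss hk))
      refine ⟨T, hT.trans hss, hirr, fun j hj => ?_⟩
      obtain rfl | hji := eq_or_ne j i
      · exact gen_le hgen hmem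
      · exact hgen j (Finset.mem_erase.2 ⟨hji, hj⟩)

end Irredundant

/-! ### Orbits of an involution -/

section FiberGroup

variable {X Q : Type*} {ζ : Perm X} {p : X → Q}

/-- The permutations that preserve every fiber of `p`. For a coloring `p` these are the color
preserving permutations. -/
def fiberGroup (p : X → Q) : Subgroup (Perm X) where
  carrier := {g | ∀ x, p (g x) = p x}
  one_mem' _ := rfl
  mul_mem' ha hb x := (ha _).trans (hb x)
  inv_mem' {a} ha x := by rw [← ha (a⁻¹ x), Perm.coe_inv, Equiv.apply_symm_apply]

theorem mem_fiberGroup {g : Perm X} : g ∈ fiberGroup p ↔ ∀ x, p (g x) = p x := Iff.rfl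

/-- `p` is a quotient map onto the set of orbits of the involution `ζ`. -/
structure IsInvolQuotient (ζ : Perm X) (p : X → Q) : Prop where
  invol : Function.Involutive ζ
  surj : Function.Surjective p
  fiber : ∀ x y, p x = p y ↔ y = x ∨ y = ζ x

theorem exists_isInvolQuotient.{u} {X : Type u} [Finite X] {ζ : Perm X}
    (hζ : Function.Involutive ζ) :
    ∃ (Q : Type u) (_ : Finite Q) (p : X → Q), IsInvolQuotient ζ p := by
  let s : Setoid X :=
    { r := fun x y => y = x ∨ y = ζ x
      iseqv :=
        { refl := fun _ => Or.inl rfl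
          symm := by
            rintro x y (rfl | rfl)
            · exact Or.inl rfl
            · exact Or.inr (hζ x).symm
          trans := by rintro x y z (rfl | rfl) (rfl | rfl) <;> simp [hζ _] } }
  exact ⟨Quotient s, inferInstance, Quotient.mk s, hζ, Quotient.mk_surjective,
    fun _ _ => Quotient.eq (r := s)⟩

namespace IsInvolQuotient

theorem map_invol (hp : IsInvolQuotient ζ p) (x : X) : p (ζ x) = p x :=
  ((hp.fiber x (ζ x)).2 (Or.inr rfl)).symm

theorem invol_mem (hp : IsInvolQuotient ζ p) : ζ ∈ fiberGroup p := hp.map_invol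

theorem mem_fiberGroup_iff (hp : IsInvolQuotient ζ p) {g : Perm X} :
    g ∈ fiberGroup p ↔ ∀ x, g x = x ∨ g x = ζ x :=
  forall_congr' fun x => eq_comm.trans (hp.fiber x (g x))

theorem apply_invol (hp : IsInvolQuotient ζ p) {g : Perm X} (hg : g ∈ fiberGroup p) (x : X) :
    g (ζ x) = ζ (g x) := by
  rw [hp.mem_fiberGroup_iff] at hg
  have hζx := hg (ζ x)
  rw [hp.invol] at hζx
  rcases hg x with h1 | h1 <;> rcases hζx with h2 | h2
  · rw [h2, h1]
  · have := g.injective (h1.trans h2.symm)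
    rw [h2, h1, ← this]
  · have := g.injective (h1.trans h2.symm)
    rw [h2, h1, ← this, ← this]
  · rw [h2, h1, hp.invol]

theorem commute (hp : IsInvolQuotient ζ p) {g h : Perm X} (hg : g ∈ fiberGroup p)
    (hh : h ∈ fiberGroup p) : Commute g h := by
  ext x
  simp only [Perm.mul_apply]
  rcases hp.mem_fiberGroup_iff.1 hg x with h1 | h1 <;>
    rcases hp.mem_fiberGroup_iff.1 hh x with h2 | h2 <;>
    simp [h1, h2, hp.apply_invol hg, hp.apply_invol hh]

theorem mul_self (hp : IsInvolQuotient ζ p) {g : Perm X} (hg : g ∈ fiberGroup p) :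
    g * g = 1 := by
  ext x
  rw [Perm.mul_apply, Perm.one_apply]
  rcases hp.mem_fiberGroup_iff.1 hg x with h | h
  · rw [h, h]
  · rw [h, hp.apply_invol hg, h, hp.invol]

/-- The points of the quotient whose fiber is moved by `ζ`. -/
def moved (_hp : IsInvolQuotient ζ p) : Set Q := p '' {x | ζ x ≠ x}

theorem mem_moved_iff (hp : IsInvolQuotient ζ p) {x : X} : p x ∈ hp.moved ↔ ζ x ≠ x := by
  refine ⟨?_, fun h => ⟨x, h, rfl⟩⟩
  rintro ⟨y, hy, hyx⟩
  rcases (hp.fiber y x).1 hyx with rfl | rfl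
  · exact hy
  · exact fun h => hy (ζ.injective h)

theorem ncard_moved_add_card [Finite X] (hp : IsInvolQuotient ζ p) :
    hp.moved.ncard + Nat.card Q = Nat.card X := by
  obtain ⟨sec, hsec⟩ := hp.surj.hasRightInverse
  have hout : ∀ x ∉ Set.range sec, x = ζ (sec (p x)) := fun x hx =>
    ((hp.fiber (sec (p x)) x).1 (hsec _)).resolve_left fun h => hx ⟨_, h.symm⟩
  have hinj : Set.InjOn p (Set.range sec)ᶜ := fun x hx y hy hxy => by
    rw [hout x hx, hout y hy, hxy]
  have himage : p '' (Set.range sec)ᶜ = hp.moved := by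
    refine Set.Subset.antisymm ?_ ?_
    · rintro _ ⟨x, hx, rfl⟩
      refine hp.mem_moved_iff.2 fun hfix => hx ⟨p x, ζ.injective ?_⟩
      rw [← hout x hx, hfix]
    · rintro _ ⟨x, hx, rfl⟩
      by_cases hmem : x ∈ Set.range sec
      · obtain ⟨q, rfl⟩ := hmem
        refine ⟨ζ (sec q), ?_, hp.map_invol _⟩
        rintro ⟨q', hq'⟩
        have : q' = q := by rw [← hsec q', hq', hp.map_invol, hsec]
        exact hx (by rw [← hq', this])
      · exact ⟨x, hmem, rfl⟩
  rw [← himage, hinj.ncard_image, ← Set.ncard_range_of_injective hsec.injective,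
    add_comm, Set.ncard_add_ncard_compl]

theorem card_lt [Finite X] (hp : IsInvolQuotient ζ p) (hζ : ζ ≠ 1) :
    Nat.card Q < Nat.card X := by
  have := Finite.of_surjective p hp.surj
  obtain ⟨x, hx⟩ : ∃ x, ζ x ≠ x := by
    contrapose! hζ
    exact Perm.ext hζ
  have : 0 < hp.moved.ncard := (Set.ncard_pos).2 ⟨p x, hp.mem_moved_iff.2 hx⟩
  have := hp.ncard_moved_add_card
  omega

theorem card_le_two_mul [Finite X] (hp : IsInvolQuotient ζ p) :
    Nat.card X ≤ 2 * Nat.card Q := by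
  have := Finite.of_surjective p hp.surj
  have := Set.ncard_le_card hp.moved
  have := hp.ncard_moved_add_card
  omega

open Classical in
/-- The permutation that acts as `ζ` on the fibers over `B` and trivially elsewhere. -/
noncomputable def flip (hp : IsInvolQuotient ζ p) (B : Set Q) : Perm X :=
  Function.Involutive.toPerm (fun x => if p x ∈ B then ζ x else x) fun x => by
    by_cases h : p x ∈ B <;> simp [h, hp.map_invol, hp.invol x]

open Classical in
theorem flip_apply (hp : IsInvolQuotient ζ p) (B : Set Q) (x : X) :
    hp.flip B x = if p x ∈ B then ζ x else x := rfl

theorem flip_mem (hp : IsInvolQuotient ζ p) (B : Set Q) : hp.flip B ∈ fiberGroup p := by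
  rw [hp.mem_fiberGroup_iff]
  intro x
  rw [flip_apply]
  split_ifs <;> simp

theorem flip_empty (hp : IsInvolQuotient ζ p) : hp.flip ∅ = 1 := by
  ext x
  simp [flip_apply]

theorem flip_univ (hp : IsInvolQuotient ζ p) : hp.flip Set.univ = ζ := by
  ext x
  simp [flip_apply]

theorem flip_insert (hp : IsInvolQuotient ζ p) {B : Set Q} {q : Q} (hq : q ∉ B) :
    hp.flip (insert q B) = hp.flip {q} * hp.flip B := by
  ext x
  rw [Perm.mul_apply]
  obtain rfl | hx := eq_or_ne (p x) q
  · simp [flip_apply, hq]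
  · by_cases hxB : p x ∈ B <;> simp [flip_apply, hxB, hx, hp.map_invol]

theorem flip_singleton_ne_one_iff (hp : IsInvolQuotient ζ p) {q : Q} :
    hp.flip {q} ≠ 1 ↔ q ∈ hp.moved := by
  obtain ⟨x, rfl⟩ := hp.surj q
  rw [hp.mem_moved_iff, not_iff_not]
  refine ⟨fun h => by simpa [flip_apply] using DFunLike.congr_fun h x, fun hx => ?_⟩
  ext y
  rw [flip_apply, Perm.one_apply]
  split_ifs with hy
  · rcases (hp.fiber x y).1 (Set.mem_singleton_iff.1 hy).symm with rfl | rfl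
    · exact hx
    · rw [hx, hx]
  · rfl

theorem flip_image_moved (hp : IsInvolQuotient ζ p) {g : Perm X} (hg : g ∈ fiberGroup p) :
    hp.flip (p '' {x | g x ≠ x}) = g := by
  have hg' := hp.mem_fiberGroup_iff.1 hg
  ext x
  rw [flip_apply]
  split_ifs with h
  · obtain ⟨y, hgy, hy⟩ := h
    rcases (hp.fiber y x).1 hy with rfl | rfl
    · exact ((hg' x).resolve_left hgy).symm
    · rw [hp.apply_invol hg, (hg' y).resolve_left hgy]
  · by_contra hgx
    exact h ⟨x, Ne.symm hgx, rfl⟩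

theorem conj_flip (hp : IsInvolQuotient ζ p) {g : Perm X} {g' : Perm Q}
    (hc : Commute g ζ) (hg : Function.Semiconj p g g') (q : Q) :
    g * hp.flip {q} * g⁻¹ = hp.flip {g' q} := by
  rw [mul_inv_eq_iff_eq_mul]
  ext x
  have hgζ : g (ζ x) = ζ (g x) := DFunLike.congr_fun hc.eq x
  by_cases h : p x = q
  · simp [flip_apply, h, hg.eq, hgζ]
  · simp [flip_apply, h, hg.eq]

theorem card_fiberGroup_mul_le [Finite X] (hp : IsInvolQuotient ζ p) :
    Nat.card (fiberGroup p) * 2 ^ Nat.card Q ≤ 2 ^ Nat.card X := by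
  have := Finite.of_surjective p hp.surj
  let F : fiberGroup p → 𝒫 hp.moved := fun g => ⟨p '' {x | g.1 x ≠ x}, by
    rintro _ ⟨x, hx, rfl⟩
    have hgx := (hp.mem_fiberGroup_iff.1 g.2 x).resolve_left hx
    exact hp.mem_moved_iff.2 (hgx ▸ hx)⟩
  have hF : Function.Injective F := fun g h hgh => Subtype.ext <| by
    rw [← hp.flip_image_moved g.2, ← hp.flip_image_moved h.2]
    exact congrArg hp.flip (Subtype.ext_iff.1 hgh)
  have hcard := Nat.card_le_card_of_injective F hF
  rw [Nat.card_coe_set_eq, Set.ncard_powerset] at hcard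
  rw [← hp.ncard_moved_add_card, pow_add]
  exact Nat.mul_le_mul_right _ hcard

open Classical in
theorem flip_mem_iff_even (hp : IsInvolQuotient ζ p) {W : Subgroup (Perm X)}
    (hW : ∀ u ∈ fiberGroup p, ∀ v ∈ fiberGroup p, (u * v ∈ W ↔ (u ∈ W ↔ v ∈ W)))
    (B : Finset Q) : hp.flip B ∈ W ↔ Even (B.filter fun q => hp.flip {q} ∉ W).card := by
  induction B using Finset.induction_on with
  | empty => simp [hp.flip_empty, W.one_mem]
  | insert q B hq ih =>
    rw [Finset.coe_insert, hp.flip_insert hq, hW _ (hp.flip_mem _) _ (hp.flip_mem _), ih,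
      Finset.filter_insert]
    by_cases h : hp.flip {q} ∈ W
    · rw [if_neg (not_not.2 h)]
      tauto
    · rw [if_pos h, Finset.card_insert_of_notMem (by simp [hq]), Nat.even_add_one]
      tauto

end IsInvolQuotient

end FiberGroup

/-! ### Descent along an involution -/

section Semiconj

variable {X Q : Type*} {ζ : Perm X} {p : X → Q}

/-- The pairs `(g, g')` such that the map `p` carries the action of `g` to that of `g'`. -/
def semiconjSubgroup (p : X → Q) : Subgroup (Perm X × Perm Q) where
  carrier := {g | Function.Semiconj p g.1 g.2}
  one_mem' := Function.Semiconj.id_right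
  mul_mem' ha hb := ha.comp_right hb
  inv_mem' {g} hg := hg.inverses_right g.1.apply_symm_apply g.2.symm_apply_apply

theorem semiconj_pow {g : Perm X} {g' : Perm Q} (h : Function.Semiconj p g g') (k : ℕ) :
    Function.Semiconj p (g ^ k : Perm X) (g' ^ k : Perm Q) :=
  (semiconjSubgroup p).pow_mem (x := (g, g')) h k

section Gen

variable {σ : ℕ → Perm X} {σ' : ℕ → Perm Q} {A : Finset ℕ}

theorem gen_prod_le_semiconjSubgroup (h : ∀ i ∈ A, Function.Semiconj p (σ i) (σ' i)) :
    gen (fun i => (σ i, σ' i)) A ≤ semiconjSubgroup p :=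
  gen_le h

theorem exists_semiconj_of_mem_gen (h : ∀ i ∈ A, Function.Semiconj p (σ i) (σ' i))
    {g : Perm X} (hg : g ∈ gen σ A) :
    ∃ g' ∈ gen σ' A, Function.Semiconj p g g' := by
  obtain ⟨⟨_, g'⟩, hmem, rfl⟩ : g ∈ (gen (fun i => (σ i, σ' i)) A).map (MonoidHom.fst _ _) := by
    rwa [map_gen]
  refine ⟨g', ?_, gen_prod_le_semiconjSubgroup h hmem⟩
  have := Subgroup.mem_map_of_mem (MonoidHom.snd _ _) hmem
  rwa [map_gen] at this

theorem exists_mem_gen_semiconj (h : ∀ i ∈ A, Function.Semiconj p (σ i) (σ' i))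
    {g' : Perm Q} (hg : g' ∈ gen σ' A) :
    ∃ g ∈ gen σ A, Function.Semiconj p g g' := by
  obtain ⟨⟨g, _⟩, hmem, rfl⟩ : g' ∈ (gen (fun i => (σ i, σ' i)) A).map (MonoidHom.snd _ _) := by
    rwa [map_gen]
  refine ⟨g, ?_, gen_prod_le_semiconjSubgroup h hmem⟩
  have := Subgroup.mem_map_of_mem (MonoidHom.fst _ _) hmem
  rwa [map_gen] at this

end Gen

theorem mem_normalizer_fiberGroup {g : Perm X} {g' : Perm Q} (h : Function.Semiconj p g g') :
    g ∈ Subgroup.normalizer (fiberGroup p : Set (Perm X)) := by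
  refine Subgroup.mem_normalizer_iff.2 fun v => ?_
  rw [mem_fiberGroup, mem_fiberGroup,
    ← g.forall_congr_right (q := fun x => p ((g * v * g⁻¹) x) = p x)]
  simp [h.eq]

theorem IsInvolQuotient.eq_of_semiconj (hp : IsInvolQuotient ζ p) {g : Perm X} {a b : Perm Q}
    (ha : Function.Semiconj p g a) (hb : Function.Semiconj p g b) : a = b := by
  ext q
  obtain ⟨x, rfl⟩ := hp.surj q
  rw [← ha.eq, hb.eq]

theorem IsInvolQuotient.exists_semiconj (hp : IsInvolQuotient ζ p) {g : Perm X}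
    (hg : Commute g ζ) : ∃ g' : Perm Q, Function.Semiconj p g g' := by
  obtain ⟨sec, hsec⟩ := hp.surj.hasRightInverse
  have hwd : ∀ g : Perm X, Commute g ζ → ∀ x, p (g (sec (p x))) = p (g x) := by
    intro g hg x
    rcases (hp.fiber x (sec (p x))).1 (hsec _).symm with h | h
    · rw [h]
    · rw [h, ← Perm.mul_apply, hg.eq, Perm.mul_apply, hp.map_invol]
  refine ⟨⟨fun q => p (g (sec q)), fun q => p (g⁻¹ (sec q)), fun q => ?_, fun q => ?_⟩,
    fun x => (hwd g hg x).symm⟩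
  · beta_reduce
    rw [hwd _ hg.inv_left, Perm.coe_inv, symm_apply_apply, hsec]
  · beta_reduce
    rw [hwd _ hg, Perm.coe_inv, apply_symm_apply, hsec]

end Semiconj

/-- The descent of an irredundant family `σ` to the set `Q` of orbits of a commuting involution `ζ`:
the induced family `σ'`, and an irredundant subfamily indexed by `T` that generates the induced
group. -/
structure IsDescent {X Q : Type*} (ζ : Perm X) (p : X → Q) (σ : ℕ → Perm X) (σ' : ℕ → Perm Q)
    (S T : Finset ℕ) : Prop where
  quot : IsInvolQuotient ζ p
  irr : Irredundant σ S
  comm : ∀ i ∈ S, Commute (σ i) ζ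
  semiconj : ∀ i ∈ S, Function.Semiconj p (σ i) (σ' i)
  subset : T ⊆ S
  irr' : Irredundant σ' T
  mem_gen' : ∀ i ∈ S, σ' i ∈ gen σ' T

theorem IsInvolQuotient.exists_isDescent {X Q : Type*} {ζ : Perm X} {p : X → Q} {σ : ℕ → Perm X}
    {S : Finset ℕ} (hp : IsInvolQuotient ζ p) (hσ : Irredundant σ S)
    (hc : ∀ i ∈ S, Commute (σ i) ζ) : ∃ σ' T, IsDescent ζ p σ σ' S T := by
  have hex : ∀ i, ∃ g' : Perm Q, i ∈ S → Function.Semiconj p (σ i) g' := fun i => by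
    by_cases hi : i ∈ S
    · obtain ⟨g', hg'⟩ := hp.exists_semiconj (hc i hi)
      exact ⟨g', fun _ => hg'⟩
    · exact ⟨1, fun h => absurd h hi⟩
  choose σ' hσ' using hex
  have hmul : ∀ i ∈ S, ∀ j ∈ S, Function.Semiconj p (σ i * σ j : Perm X) (σ' i * σ' j : Perm Q) :=
    fun i hi j hj => (hσ' i hi).comp_right (hσ' j hj)
  obtain ⟨T, hTS, hT, hgen⟩ := exists_irredundant_subset (σ := σ') (S := S)
    (fun i hi => hp.eq_of_semiconj (g := 1) (hσ.mul_self i hi ▸ hmul i hi i hi) fun _ => rfl)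
    (fun i hi j hj hij => hp.eq_of_semiconj (hmul i hi j hj)
      ((hσ.comm i hi j hj hij).eq ▸ hmul j hj i hi))
  exact ⟨σ', T, hp, hσ, hc, hσ', hTS, hT, hgen⟩

theorem exists_isDescent.{u} {X : Type u} [Finite X] {ζ : Perm X} {σ : ℕ → Perm X} {S : Finset ℕ}
    (hζ : Function.Involutive ζ) (hσ : Irredundant σ S) (hc : ∀ i ∈ S, Commute (σ i) ζ) :
    ∃ (Q : Type u) (_ : Finite Q) (p : X → Q) (σ' : ℕ → Perm Q) (T : Finset ℕ),
      IsDescent ζ p σ σ' S T := by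
  obtain ⟨Q, hQ, p, hp⟩ := exists_isInvolQuotient hζ
  obtain ⟨σ', T, h⟩ := hp.exists_isDescent hσ hc
  exact ⟨Q, hQ, p, σ', T, h⟩

/-- The kernel of the action on the fibers of `p` of the group generated by the members of `σ` with
index in `A`. -/
def kern {X Q : Type*} (p : X → Q) (σ : ℕ → Perm X) (A : Finset ℕ) : Subgroup (Perm X) :=
  gen σ A ⊓ fiberGroup p

theorem kern_le_fiberGroup {X Q : Type*} {p : X → Q} {σ : ℕ → Perm X} {A : Finset ℕ} :
    kern p σ A ≤ fiberGroup p := inf_le_right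

theorem kern_mono {X Q : Type*} {p : X → Q} {σ : ℕ → Perm X} {A B : Finset ℕ} (hAB : A ⊆ B) :
    kern p σ A ≤ kern p σ B :=
  inf_le_inf_right _ (gen_mono hAB)

namespace IsDescent

variable {X Q : Type*} {ζ : Perm X} {p : X → Q} {σ : ℕ → Perm X} {σ' : ℕ → Perm Q}
  {S T A B : Finset ℕ}

theorem commute_invol (h : IsDescent ζ p σ σ' S T) {g : Perm X} (hg : g ∈ gen σ S) :
    Commute g ζ :=
  commute_of_mem_gen h.comm hg

theorem semiconj_of_subset (h : IsDescent ζ p σ σ' S T) (hA : A ⊆ S) :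
    ∀ i ∈ A, Function.Semiconj p (σ i) (σ' i) := fun i hi => h.semiconj i (hA hi)

theorem gen_le_normalizer_fiberGroup (h : IsDescent ζ p σ σ' S T) :
    gen σ S ≤ Subgroup.normalizer (fiberGroup p : Set (Perm X)) :=
  gen_le fun i hi => mem_normalizer_fiberGroup (h.semiconj i hi)

theorem exists_eq_mul (h : IsDescent ζ p σ σ' S T) {g : Perm X} (hg : g ∈ gen σ S) :
    ∃ a ∈ gen σ T, ∃ v ∈ fiberGroup p, g = a * v := by
  obtain ⟨g', hg', hgg'⟩ := exists_semiconj_of_mem_gen h.semiconj hg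
  obtain ⟨a, ha, hag'⟩ :=
    exists_mem_gen_semiconj (h.semiconj_of_subset h.subset) (gen_le h.mem_gen' hg')
  refine ⟨a, ha, a⁻¹ * g, fun x => g'.injective ?_, by simp⟩
  rw [← hag'.eq, ← hgg'.eq, ← Perm.mul_apply, mul_inv_cancel_left]

theorem gen_le_normalizer_kern (h : IsDescent ζ p σ σ' S T) (hTA : T ⊆ A) :
    gen σ S ≤ Subgroup.normalizer (kern p σ A : Set (Perm X)) := by
  intro g hg
  obtain ⟨a, ha, v, hv, rfl⟩ := h.exists_eq_mul hg
  have haS : a ∈ Subgroup.normalizer (kern p σ A : Set (Perm X)) :=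
    Subgroup.inf_normalizer_le_normalizer_inf (H := gen σ A) (K := fiberGroup p)
      (Subgroup.mem_inf.2 ⟨Subgroup.le_normalizer (gen_mono hTA ha),
        h.gen_le_normalizer_fiberGroup (gen_mono h.subset ha)⟩)
  refine Subgroup.mul_mem _ haS (Subgroup.mem_normalizer_iff.2 fun w => ?_)
  have hcomm : ∀ u ∈ fiberGroup p, v * u * v⁻¹ = u := fun u hu => by
    rw [(h.quot.commute hv hu).eq, mul_inv_cancel_right]
  refine ⟨fun hw => by rwa [hcomm w hw.2], fun hw => ?_⟩
  have hwp : w ∈ fiberGroup p :=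
    (Subgroup.mem_normalizer_iff.1 (Subgroup.le_normalizer hv) w).2 hw.2
  rwa [hcomm w hwp] at hw

theorem kern_lt_kern_insert (h : IsDescent ζ p σ σ' S T) (hTA : T ⊆ A) (hAS : A ⊆ S) {b : ℕ}
    (hb : b ∈ S) (hbA : b ∉ A) : kern p σ A < kern p σ (insert b A) := by
  refine (kern_mono (Finset.subset_insert _ _)).lt_of_not_ge fun hle => ?_
  obtain ⟨a, ha, v, hv, hav⟩ := h.exists_eq_mul (mem_gen hb)
  have haA := gen_mono hTA ha
  have hvB : v ∈ kern p σ (insert b A) := by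
    refine Subgroup.mem_inf.2 ⟨?_, hv⟩
    rw [eq_inv_mul_of_mul_eq hav.symm]
    exact mul_mem (inv_mem (gen_mono (Finset.subset_insert _ _) haA))
      (mem_gen (Finset.mem_insert_self _ _))
  exact h.irr.notMem_gen hAS hb hbA (hav ▸ mul_mem haA (hle hvB).1)

section Card

variable [Finite X]

theorem card_kern_mul_le (h : IsDescent ζ p σ σ' S T) (hTA : T ⊆ A) (hAB : A ⊆ B) (hBS : B ⊆ S) :
    Nat.card (kern p σ A) * 2 ^ (B.card - A.card) ≤ Nat.card (kern p σ B) :=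
  card_mul_two_pow_le hAB fun _ hAC hCB _ hb hbC =>
    h.kern_lt_kern_insert (hTA.trans hAC) (hCB.trans hBS) (hBS hb) hbC

theorem two_pow_le_card_kern (h : IsDescent ζ p σ σ' S T) (hTA : T ⊆ A) (hAS : A ⊆ S) :
    2 ^ (A.card - T.card) ≤ Nat.card (kern p σ A) :=
  (Nat.le_mul_of_pos_left _ Nat.card_pos).trans (h.card_kern_mul_le subset_rfl hTA hAS)

theorem two_mul_card_kern_le (h : IsDescent ζ p σ σ' S T) (hζ : ζ ∉ gen σ A) :
    2 * Nat.card (kern p σ A) ≤ Nat.card (fiberGroup p) :=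
  two_mul_card_le_of_lt <| kern_le_fiberGroup.lt_of_not_ge fun hle => hζ (hle h.quot.invol_mem).1

theorem card_add_card_le (h : IsDescent ζ p σ σ' S T) :
    S.card + Nat.card Q ≤ T.card + Nat.card X := by
  have hpow : 2 ^ (S.card - T.card + Nat.card Q) ≤ 2 ^ Nat.card X := by
    rw [pow_add]
    exact (Nat.mul_le_mul_right _ ((h.two_pow_le_card_kern h.subset subset_rfl).trans
      (Subgroup.card_le_of_le kern_le_fiberGroup))).trans h.quot.card_fiberGroup_mul_le
  rw [Nat.pow_le_pow_iff_right (by norm_num)] at hpow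
  omega

theorem card_add_card_lt (h : IsDescent ζ p σ σ' S T) (hζ : ζ ∉ gen σ S) :
    S.card + Nat.card Q < T.card + Nat.card X := by
  have hpow : 2 ^ (1 + (S.card - T.card) + Nat.card Q) ≤ 2 ^ Nat.card X := by
    rw [pow_add, pow_add, pow_one]
    exact (Nat.mul_le_mul_right _ ((Nat.mul_le_mul_left 2
      (h.two_pow_le_card_kern h.subset subset_rfl)).trans
        (h.two_mul_card_kern_le hζ))).trans h.quot.card_fiberGroup_mul_le
  rw [Nat.pow_le_pow_iff_right (by norm_num)] at hpow
  omega

end Card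

theorem exists_coloring {C : Type*} (h : IsDescent ζ p σ σ' S T) {col : X → C}
    (hζ : ζ ∈ fiberGroup col) (hcol : ∀ i ∈ S, σ i ∈ fiberGroup col) :
    ∃ col' : Q → C, col' ∘ p = col ∧ ∀ i ∈ S, σ' i ∈ fiberGroup col' := by
  obtain ⟨sec, hsec⟩ := h.quot.surj.hasRightInverse
  have hcolp : ∀ x, col (sec (p x)) = col x := fun x => by
    rcases (h.quot.fiber x (sec (p x))).1 (hsec _).symm with e | e
    · rw [e]
    · rw [e, hζ]
  refine ⟨col ∘ sec, funext hcolp, fun i hi q => ?_⟩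
  obtain ⟨x, rfl⟩ := h.quot.surj q
  rw [← (h.semiconj i hi).eq, Function.comp_apply, Function.comp_apply, hcolp, hcolp, hcol i hi]

end IsDescent

section Extremal

/-- The square `u * u` centralizes `M`: conjugation by `u` moves an element of `M` by a factor in
`N`, which `u` fixes, so that the factor occurs twice in the conjugate under `u * u`. -/
theorem commute_mul_self_of_two_mul_card_eq {Γ : Type*} [Group Γ] [Finite Γ] {N M : Subgroup Γ}
    {u : Γ} (hNM : N ≤ M) (hcard : 2 * Nat.card N = Nat.card M)
    (hN : u ∈ Subgroup.normalizer (N : Set Γ)) (hM : u ∈ Subgroup.normalizer (M : Set Γ))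
    (hsq : ∀ v ∈ N, v * v = 1) (hc : ∀ v ∈ N, Commute u v) {v : Γ} (hv : v ∈ M) :
    Commute (u * u) v := by
  rw [Subgroup.mem_normalizer_iff] at hN hM
  obtain ⟨w, hw⟩ : ∃ w, w = u * v * u⁻¹ * v⁻¹ := ⟨_, rfl⟩
  have hwN : w ∈ N := by
    rw [hw, mul_mem_iff_of_two_mul_card_eq hNM hcard ((hM v).1 hv) (inv_mem hv), ← hN,
      inv_mem_iff]
  have huv : u * v = w * v * u := by rw [hw]; group
  calc u * u * v = u * w * v * u := by rw [mul_assoc, huv]; group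
    _ = w * (u * v) * u := by rw [(hc w hwN).eq]; group
    _ = w * w * v * (u * u) := by rw [huv]; group
    _ = v * (u * u) := by rw [hsq w hwN, one_mul]

theorem exists_mem_fixed_of_not_dvd_ncard {Q : Type*} [Finite Q] {ℓ : ℕ} [Fact ℓ.Prime]
    {H : Subgroup (Perm Q)} {M : Set Q} (hM : ∀ g ∈ H, ∀ q ∈ M, g q ∈ M)
    (hpow : ∀ g ∈ H, ∃ k : ℕ, ∀ q ∈ M, (g ^ ℓ ^ k) q = q) (hdvd : ¬ ℓ ∣ M.ncard) :
    ∃ q ∈ M, ∀ g ∈ H, g q = q := by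
  let N : SubMulAction H Q := ⟨M, fun g _ hq => hM g g.2 _ hq⟩
  have hP : IsPGroup ℓ (MulAction.toPermHom H N).range := by
    rintro ⟨_, g, rfl⟩
    obtain ⟨k, hk⟩ := hpow g g.2
    refine ⟨k, Subtype.ext ?_⟩
    rw [SubmonoidClass.coe_pow, ← map_pow, OneMemClass.coe_one]
    ext q
    exact hk q q.2
  obtain ⟨q, hq⟩ := hP.nonempty_fixed_point_of_prime_not_dvd_card N hdvd
  exact ⟨q, q.2, fun g hg => congrArg Subtype.val (hq ⟨_, ⟨g, hg⟩, rfl⟩)⟩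

/-- A descent along an involution not generated by the family, for which equality is attained in
`IsDescent.card_add_card_lt`. -/
structure IsSharpDescent {X Q : Type*} (ζ : Perm X) (p : X → Q) (σ : ℕ → Perm X)
    (σ' : ℕ → Perm Q) (S T : Finset ℕ) : Prop extends IsDescent ζ p σ σ' S T where
  notMem : ζ ∉ gen σ S
  card_le : Nat.card X + T.card ≤ S.card + 1 + Nat.card Q

namespace IsSharpDescent

variable {X Q : Type*} [Finite X] {ζ : Perm X} {p : X → Q} {σ : ℕ → Perm X} {σ' : ℕ → Perm Q}
  {S T A B : Finset ℕ}

theorem card_kern (h : IsSharpDescent ζ p σ σ' S T) (hTA : T ⊆ A) (hAS : A ⊆ S) :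
    Nat.card (kern p σ A) = 2 ^ (A.card - T.card) := by
  refine le_antisymm ?_ (h.two_pow_le_card_kern hTA hAS)
  refine Nat.le_of_mul_le_mul_right (c := 2 ^ (S.card - A.card + 1 + Nat.card Q)) ?_
    (by positivity)
  have hTAc := Finset.card_le_card hTA
  have hASc := Finset.card_le_card hAS
  have hle := h.card_le
  calc Nat.card (kern p σ A) * 2 ^ (S.card - A.card + 1 + Nat.card Q)
      = 2 * (Nat.card (kern p σ A) * 2 ^ (S.card - A.card)) * 2 ^ Nat.card Q := by ring
    _ ≤ 2 * Nat.card (kern p σ S) * 2 ^ Nat.card Q := by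
        gcongr
        exact h.card_kern_mul_le hTA hAS subset_rfl
    _ ≤ Nat.card (fiberGroup p) * 2 ^ Nat.card Q := by
        gcongr
        exact h.two_mul_card_kern_le h.notMem
    _ ≤ 2 ^ Nat.card X := h.quot.card_fiberGroup_mul_le
    _ ≤ 2 ^ (A.card - T.card + (S.card - A.card + 1 + Nat.card Q)) :=
        Nat.pow_le_pow_right (by norm_num) (by omega)
    _ = 2 ^ (A.card - T.card) * 2 ^ (S.card - A.card + 1 + Nat.card Q) := pow_add _ _ _

theorem two_mul_card_kern (h : IsSharpDescent ζ p σ σ' S T) :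
    2 * Nat.card (kern p σ S) = Nat.card (fiberGroup p) := by
  refine le_antisymm (h.two_mul_card_kern_le h.notMem) ?_
  rw [h.card_kern h.subset subset_rfl]
  have hTS := Finset.card_le_card h.subset
  have hle := h.card_le
  refine Nat.le_of_mul_le_mul_right (h.quot.card_fiberGroup_mul_le.trans ?_)
    (show 0 < 2 ^ Nat.card Q by positivity)
  rw [← pow_succ', ← pow_add]
  exact Nat.pow_le_pow_right (by norm_num) (by omega)

theorem mul_mem_kern_iff (h : IsSharpDescent ζ p σ σ' S T) : ∀ u ∈ fiberGroup p,
    ∀ v ∈ fiberGroup p, (u * v ∈ kern p σ S ↔ (u ∈ kern p σ S ↔ v ∈ kern p σ S)) :=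
  fun _ hu _ hv => mul_mem_iff_of_two_mul_card_eq kern_le_fiberGroup h.two_mul_card_kern hu hv

theorem commute_pow_of_mem_kern_union (h : IsSharpDescent ζ p σ σ' S T) {g : Perm X}
    (hg : g ∈ gen σ S) (D : Finset ℕ) (hD : Disjoint D T) (hDS : D ⊆ S) :
    ∀ v ∈ kern p σ (D ∪ T), Commute (g ^ 2 ^ D.card) v := by
  induction D using Finset.induction_on with
  | empty =>
    intro v hv
    have hT := h.card_kern subset_rfl h.subset
    rw [Nat.sub_self, pow_zero, Subgroup.card_eq_one] at hT
    rw [Finset.empty_union, hT, Subgroup.mem_bot] at hv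
    rw [hv]
    exact Commute.one_right _
  | insert b D hb ih =>
    rw [Finset.disjoint_insert_left] at hD
    rw [Finset.insert_subset_iff] at hDS
    have hT : ∀ E : Finset ℕ, T ⊆ E ∪ T := fun _ => Finset.subset_union_right
    have hS : insert b D ∪ T ⊆ S :=
      Finset.union_subset (Finset.insert_subset hDS.1 hDS.2) h.subset
    have hsub : D ∪ T ⊆ insert b D ∪ T :=
      Finset.union_subset_union_left (Finset.subset_insert _ _)
    have hcard : 2 * Nat.card (kern p σ (D ∪ T)) = Nat.card (kern p σ (insert b D ∪ T)) := by
      rw [h.card_kern (hT _) (hsub.trans hS), h.card_kern (hT _) hS, ← pow_succ',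
        Finset.card_union_of_disjoint hD.2, Finset.insert_union,
        Finset.card_insert_of_notMem (by simp [hb, hD.1]), Finset.card_union_of_disjoint hD.2,
        Nat.add_sub_cancel, Nat.add_right_comm, Nat.add_sub_cancel]
    have hu : g ^ 2 ^ D.card ∈ gen σ S := pow_mem hg _
    rw [Finset.card_insert_of_notMem hb, pow_succ, pow_mul, pow_two]
    exact fun v => commute_mul_self_of_two_mul_card_eq (kern_mono hsub) hcard
      (h.gen_le_normalizer_kern (hT _) hu) (h.gen_le_normalizer_kern (hT _) hu)
      (fun v hv => h.quot.mul_self hv.2) (ih hD.2 hDS.2)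

theorem commute_pow_of_mem_fiberGroup (h : IsSharpDescent ζ p σ σ' S T) {g : Perm X}
    (hg : g ∈ gen σ S) : ∀ v ∈ fiberGroup p, Commute (g ^ 2 ^ ((S \ T).card + 1)) v := by
  have hu : g ^ 2 ^ (S \ T).card ∈ gen σ S := pow_mem hg _
  have hc := h.commute_pow_of_mem_kern_union hg (S \ T) Finset.sdiff_disjoint
    Finset.sdiff_subset
  rw [Finset.sdiff_union_of_subset h.subset] at hc
  rw [pow_succ, pow_mul, pow_two]
  exact fun v => commute_mul_self_of_two_mul_card_eq kern_le_fiberGroup h.two_mul_card_kern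
    (h.gen_le_normalizer_kern h.subset hu) (h.gen_le_normalizer_fiberGroup hu)
    (fun v hv => h.quot.mul_self hv.2) hc

theorem exists_pow_apply_eq (h : IsSharpDescent ζ p σ σ' S T) {g : Perm X} {g' : Perm Q}
    (hg : g ∈ gen σ S) (hgg' : Function.Semiconj p g g') :
    ∃ k : ℕ, ∀ q ∈ h.quot.moved, (g' ^ 2 ^ k) q = q := by
  refine ⟨(S \ T).card + 1, ?_⟩
  rintro _ ⟨x, hx, rfl⟩
  have hconj := h.quot.conj_flip (h.commute_invol (pow_mem hg _))
    (semiconj_pow hgg' (2 ^ ((S \ T).card + 1))) (p x)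
  rw [(h.commute_pow_of_mem_fiberGroup hg _ (h.quot.flip_mem _)).eq, mul_inv_cancel_right]
    at hconj
  by_contra hne
  have := DFunLike.congr_fun hconj x
  exact hx (by simpa [IsInvolQuotient.flip_apply, Ne.symm hne] using this)

theorem exists_fixed_fiber [Finite Q] (h : IsSharpDescent ζ p σ σ' S T) :
    ∃ q ∈ h.quot.moved, ∀ i ∈ S, σ' i q = q := by
  classical
  have := Fintype.ofFinite Q
  set M : Set Q := {q | h.quot.flip {q} ∉ kern p σ S} with hMdef
  have hodd : ¬ 2 ∣ M.ncard := by
    have hζ : h.quot.flip (Finset.univ : Finset Q) ∉ kern p σ S := by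
      rw [Finset.coe_univ, h.quot.flip_univ]
      exact fun hmem => h.notMem hmem.1
    rwa [h.quot.flip_mem_iff_even h.mul_mem_kern_iff, even_iff_two_dvd,
      ← Set.ncard_coe_finset, Finset.coe_filter_univ] at hζ
  have hMmoved : M ⊆ h.quot.moved := fun q hq =>
    h.quot.flip_singleton_ne_one_iff.1 fun h1 => hq (h1 ▸ one_mem _)
  have hpull : ∀ g' ∈ gen σ' S, ∃ g ∈ gen σ S, Function.Semiconj p g g' := fun _ hg' =>
    exists_mem_gen_semiconj h.semiconj hg'
  obtain ⟨q, hq, hfix⟩ := exists_mem_fixed_of_not_dvd_ncard (ℓ := 2) (H := gen σ' S) (M := M)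
    (fun g' hg' q hq => by
      obtain ⟨g, hg, hgg'⟩ := hpull g' hg'
      rwa [hMdef, Set.mem_ofPred, ← h.quot.conj_flip (h.commute_invol hg) hgg', ←
        Subgroup.mem_normalizer_iff.1 (h.gen_le_normalizer_kern h.subset hg)])
    (fun g' hg' => by
      obtain ⟨g, hg, hgg'⟩ := hpull g' hg'
      obtain ⟨k, hk⟩ := h.exists_pow_apply_eq hg hgg'
      exact ⟨k, fun q hq => hk q (hMmoved hq)⟩)
    hodd
  exact ⟨q, hMmoved hq, fun i hi => hfix _ (mem_gen hi)⟩

end IsSharpDescent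

end Extremal

/-! ### The bound on the length of an irredundant family -/

section Bound

theorem ncard_range_lt_ncard_range_option {Q C : Type*} [Finite Q] [DecidableEq Q] (f : Q → C)
    {q₀ q₁ : Q} (hne : q₁ ≠ q₀) (hf : f q₁ = f q₀) :
    (Set.range f).ncard < (Set.range fun q => if q = q₀ then none else some (f q)).ncard := by
  have hnone : none ∉ some '' Set.range f := by simp
  rw [← Set.ncard_image_of_injective _ (Option.some_injective C), Nat.lt_iff_add_one_le,
    ← Set.ncard_insert_of_notMem hnone]
  refine Set.ncard_le_ncard ?_
  rintro _ (rfl | ⟨_, ⟨q, rfl⟩, rfl⟩)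
  · exact ⟨q₀, if_pos rfl⟩
  · obtain rfl | hq := eq_or_ne q q₀
    · exact ⟨q₁, by simp [hne, hf]⟩
    · exact ⟨q, if_neg hq⟩

theorem commute_swap_of_mem_fiberGroup {X C : Type*} [DecidableEq X] {col : X → C} {g : Perm X}
    {x y : X} (hg : g ∈ fiberGroup col) (hxy : col y = col x)
    (hclass : ∀ z, col z = col x → z = x ∨ z = y) : Commute g (swap x y) := by
  rw [commute_iff_eq, mul_swap_eq_swap_mul]
  congr 1
  have hinj := g.injective.eq_iff (a := x) (b := y)
  rcases hclass (g x) (hg x) with hx | hx <;>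
    rcases hclass (g y) ((hg y).trans hxy) with hy | hy
  · rw [← hinj.1 (hx.trans hy.symm), hx]
  · rw [hx, hy]
  · rw [hx, hy, swap_comm]
  · rw [hinj.1 (hx.trans hy.symm), hy]

theorem swap_mem_fiberGroup {X C : Type*} [DecidableEq X] {col : X → C} {x y : X}
    (hxy : col y = col x) : swap x y ∈ fiberGroup col := fun z => by
  rw [swap_apply_def]
  split_ifs with h1 h2
  · rw [h1, hxy]
  · rw [h2, hxy]
  · rfl

namespace IsDescent

universe v

variable {X Q : Type*} {C : Type v} [Finite X] {ζ : Perm X} {p : X → Q} {σ : ℕ → Perm X}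
  {σ' : ℕ → Perm Q} {S T : Finset ℕ} {col : X → C}

theorem card_add_ncard_range_le (h : IsDescent ζ p σ σ' S T) (hζ : ζ ∈ fiberGroup col)
    (hcol : ∀ i ∈ S, σ i ∈ fiberGroup col)
    (hQ : ∀ col' : Q → C, (∀ i ∈ T, σ' i ∈ fiberGroup col') →
      T.card + (Set.range col').ncard ≤ Nat.card Q) :
    S.card + (Set.range col).ncard ≤ Nat.card X := by
  obtain ⟨col', rfl, hcol'⟩ := h.exists_coloring hζ hcol
  have := hQ col' fun i hi => hcol' i (h.subset hi)
  have := h.card_add_card_le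
  rw [h.quot.surj.range_comp]
  omega

theorem card_add_ncard_range_lt (h : IsDescent ζ p σ σ' S T) (hmem : ζ ∉ gen σ S)
    (hζ : ζ ∈ fiberGroup col) (hcol : ∀ i ∈ S, σ i ∈ fiberGroup col)
    (hQ : ∀ col' : Q → C, (∀ i ∈ T, σ' i ∈ fiberGroup col') →
      T.card + (Set.range col').ncard ≤ Nat.card Q) :
    S.card + (Set.range col).ncard < Nat.card X := by
  obtain ⟨col', rfl, hcol'⟩ := h.exists_coloring hζ hcol
  have := hQ col' fun i hi => hcol' i (h.subset hi)
  have := h.card_add_card_lt hmem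
  rw [h.quot.surj.range_comp]
  omega

/-- The fixed fiber of a sharp descent has a color of its own, since recoloring it would give an
invariant coloring of `Q` with too many colors. -/
theorem exists_color_class_of_card_le (h : IsDescent ζ p σ σ' S T) (hmem : ζ ∉ gen σ S)
    (hζ : ζ ∈ fiberGroup col) (hcol : ∀ i ∈ S, σ i ∈ fiberGroup col)
    (hQ : ∀ {D : Type v} (col' : Q → D), (∀ i ∈ T, σ' i ∈ fiberGroup col') →
      T.card + (Set.range col').ncard ≤ Nat.card Q)
    (hcard : Nat.card X ≤ S.card + 1 + (Set.range col).ncard) :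
    ∃ x, ζ x ≠ x ∧ ∀ y, col y = col x → y = x ∨ y = ζ x := by
  classical
  have := Finite.of_surjective p h.quot.surj
  obtain ⟨col', rfl, hcol'⟩ := h.exists_coloring hζ hcol
  have hle := hQ col' fun i hi => hcol' i (h.subset hi)
  rw [h.quot.surj.range_comp] at hcard
  have hsharp : IsSharpDescent ζ p σ σ' S T := ⟨h, hmem, by omega⟩
  obtain ⟨_, ⟨x, hx, rfl⟩, hfix⟩ := hsharp.exists_fixed_fiber
  refine ⟨x, hx, fun y hy => (h.quot.fiber x y).1 ?_⟩
  by_contra hyx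
  have hlt := ncard_range_lt_ncard_range_option col' (Ne.symm hyx) hy
  have := hQ (fun q => if q = p x then none else some (col' q)) fun i hi q => by
    have hiff : σ' i q = p x ↔ q = p x := by
      rw [← (σ' i).injective.eq_iff (a := q), hfix i (h.subset hi)]
    simp only [hiff, hcol' i (h.subset hi) q]
  have := h.card_add_card_lt hmem
  omega

end IsDescent

variable {X C : Type*} [Finite X] {σ : ℕ → Perm X} {S : Finset ℕ}

/-- If the bound failed, then it would fail by one, and the descent along the first generator
would be sharp; its fixed fiber would be a color class of two points, and exchanging these would be
a central involution. Descending along the latter proves the bound. -/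
theorem Irredundant.card_add_ncard_range_le (hσ : Irredundant σ S) {col : X → C}
    (hcol : ∀ i ∈ S, σ i ∈ fiberGroup col) :
    S.card + (Set.range col).ncard ≤ Nat.card X := by
  classical
  induction hn : Nat.card X using Nat.strong_induction_on generalizing X C S σ with
  | _ n ih =>
    subst hn
    rcases S.eq_empty_or_nonempty with rfl | hne
    · simpa using Finite.card_range_le col
    by_contra! hlt
    obtain ⟨i₀, hi₀, hmin⟩ := S.exists_min_image id hne
    set S' := S.filter (i₀ + 2 ≤ ·) with hS'def
    have hS' : S' ⊆ S := Finset.filter_subset _ _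
    have hcardS : S.card ≤ S'.card + 2 := by
      have hsub : S ⊆ S' ∪ {i₀, i₀ + 1} := fun i hi => by
        have : i₀ ≤ i := hmin i hi
        simp only [hS'def, Finset.mem_union, Finset.mem_filter, Finset.mem_insert,
          Finset.mem_singleton, hi, true_and]
        omega
      exact (Finset.card_le_card hsub).trans <|
        (Finset.card_union_le _ _).trans (Nat.add_le_add_left Finset.card_le_two _)
    obtain ⟨Q, _, p, σ', T, h⟩ := exists_isDescent (hσ.involutive hi₀) (hσ.mono hS') fun i hi =>
      (hσ.comm i₀ hi₀ i (hS' hi) (Finset.mem_filter.1 hi).2).symm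
    obtain ⟨x, hx, hclass⟩ := h.exists_color_class_of_card_le
      (hσ.notMem_gen hS' hi₀ (by simp [hS'def])) (hcol i₀ hi₀) (fun i hi => hcol i (hS' hi))
      (fun _ hcol' => ih _ (h.quot.card_lt (hσ.ne_one hi₀)) h.irr' hcol' rfl) (by omega)
    have hxcol := hcol i₀ hi₀ x
    obtain ⟨Q, _, p, σ', T, h⟩ := exists_isDescent (swap_apply_self x (σ i₀ x)) hσ
      fun i hi => commute_swap_of_mem_fiberGroup (hcol i hi) hxcol hclass
    exact hlt.not_ge <| h.card_add_ncard_range_le (swap_mem_fiberGroup hxcol) hcol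
      fun _ hcol' => ih _ (h.quot.card_lt (swap_eq_one_iff.not.2 (Ne.symm hx))) h.irr' hcol' rfl

theorem Irredundant.card_add_ncard_range_lt (hσ : Irredundant σ S) {ζ : Perm X}
    (hinv : Function.Involutive ζ) (hmem : ζ ∉ gen σ S) (hc : ∀ i ∈ S, Commute (σ i) ζ)
    {col : X → C} (hζ : ζ ∈ fiberGroup col) (hcol : ∀ i ∈ S, σ i ∈ fiberGroup col) :
    S.card + (Set.range col).ncard < Nat.card X := by
  obtain ⟨Q, _, p, σ', T, h⟩ := exists_isDescent hinv hσ hc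
  exact h.card_add_ncard_range_lt hmem hζ hcol fun _ => h.irr'.card_add_ncard_range_le

end Bound

/-! ### Transitive descents -/

section Transitive

variable {X C : Type*} {σ : ℕ → Perm X} {S : Finset ℕ}

theorem apply_eq_of_isPretransitive [MulAction.IsPretransitive (gen σ S) X] {col : X → C}
    (hcol : ∀ i ∈ S, σ i ∈ fiberGroup col) (x y : X) : col x = col y := by
  obtain ⟨g, rfl⟩ := MulAction.exists_smul_eq (gen σ S) x y
  exact (gen_le hcol g.2 x).symm

theorem mem_fiberGroup_orbit {H : Subgroup (Perm X)} {g : Perm X} (hg : g ∈ H) :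
    g ∈ fiberGroup (MulAction.orbit H : X → Set X) :=
  MulAction.orbit_smul (⟨g, hg⟩ : H)

theorem exists_orbit_ne {H : Subgroup (Perm X)} (h : ¬ MulAction.IsPretransitive H X) :
    ∃ x y : X, MulAction.orbit H x ≠ MulAction.orbit H y := by
  contrapose! h
  exact ⟨fun x y => MulAction.orbit_eq_iff.1 (h y x)⟩

theorem mem_fiberGroup_fixed {g z : Perm X} (h : Commute g z) :
    g ∈ fiberGroup fun x => z x = x := fun x => by
  have hx : z (g x) = g (z x) := DFunLike.congr_fun h.eq.symm x
  beta_reduce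
  rw [hx, g.injective.eq_iff]

end Transitive

section Sup

variable {Γ : Type*} [Group Γ]

theorem card_sup_le [Finite Γ] {H K : Subgroup Γ} (hc : ∀ a ∈ H, ∀ b ∈ K, Commute a b) :
    Nat.card (H ⊔ K : Subgroup Γ) ≤ Nat.card H * Nat.card K := by
  have hrange := MonoidHom.noncommCoprod_range H.subtype K.subtype fun a b => hc a a.2 b b.2
  rw [Subgroup.range_subtype, Subgroup.range_subtype] at hrange
  rw [← hrange, ← Nat.card_prod]
  exact Finite.card_range_le _

theorem normalizer_inf_le_normalizer_sup (H K : Subgroup Γ) :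
    Subgroup.normalizer (H : Set Γ) ⊓ Subgroup.normalizer (K : Set Γ) ≤
      Subgroup.normalizer ((H ⊔ K : Subgroup Γ) : Set Γ) := fun g hg => by
  rw [Subgroup.mem_inf, Subgroup.mem_normalizer_iff_map_conj_eq,
    Subgroup.mem_normalizer_iff_map_conj_eq] at hg
  rw [Subgroup.mem_normalizer_iff_map_conj_eq, Subgroup.map_sup, hg.1, hg.2]

end Sup

namespace IsDescent

variable {X Q : Type*} {ζ : Perm X} {p : X → Q} {σ : ℕ → Perm X} {σ' : ℕ → Perm Q}
  {S T A : Finset ℕ}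

theorem mem_fiberGroup_moved (h : IsDescent ζ p σ σ' S T) {i : ℕ} (hi : i ∈ S) :
    σ' i ∈ fiberGroup (· ∈ h.quot.moved) := fun q => by
  obtain ⟨x, rfl⟩ := h.quot.surj q
  beta_reduce
  rw [← (h.semiconj i hi).eq, h.quot.mem_moved_iff, h.quot.mem_moved_iff]
  exact congrArg Not (mem_fiberGroup_fixed (h.comm i hi) x)

theorem gen_le_normalizer_kern_sup (h : IsDescent ζ p σ σ' S T) (hTA : T ⊆ A) :
    gen σ S ≤
      Subgroup.normalizer ((kern p σ A ⊔ Subgroup.zpowers ζ : Subgroup (Perm X)) : Set (Perm X)) :=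
  (le_inf (h.gen_le_normalizer_kern hTA) fun g hg => Subgroup.centralizer_le_normalizer _ <| by
    rw [Subgroup.zpowers_eq_closure, Subgroup.centralizer_closure]
    exact Subgroup.mem_centralizer_singleton_iff.2 (h.commute_invol hg)).trans
      (normalizer_inf_le_normalizer_sup _ _)

section Transitive

variable [MulAction.IsPretransitive (gen σ' S) Q]

theorem eq_one_or_eq_invol (h : IsDescent ζ p σ σ' S T) {v : Perm X} (hv : v ∈ fiberGroup p)
    (hc : ∀ i ∈ S, Commute (σ i) v) : v = 1 ∨ v = ζ := by
  obtain ⟨f, hf, hfinv⟩ := h.exists_coloring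
    (mem_fiberGroup_fixed (h.quot.commute h.quot.invol_mem hv))
    (fun i hi => mem_fiberGroup_fixed (hc i hi))
  have hall : ∀ x y, (v x = x) = (v y = y) := fun x y =>
    (congrFun hf x).symm.trans ((apply_eq_of_isPretransitive hfinv _ _).trans (congrFun hf y))
  by_cases hx : ∃ x, v x = x
  · obtain ⟨x, hx⟩ := hx
    exact Or.inl (Perm.ext fun y => (hall x y).mp hx)
  · push Not at hx
    exact Or.inr (Perm.ext fun y => (h.quot.mem_fiberGroup_iff.1 hv y).resolve_left (hx y))

theorem two_mul_card_eq [Finite X] (h : IsDescent ζ p σ σ' S T) (hζ : ζ ≠ 1) :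
    2 * Nat.card Q = Nat.card X := by
  obtain ⟨x, hx⟩ : ∃ x, ζ x ≠ x := by
    contrapose! hζ
    exact Perm.ext hζ
  have hmoved : h.quot.moved = Set.univ := Set.eq_univ_of_forall fun q =>
    (apply_eq_of_isPretransitive (fun _ => h.mem_fiberGroup_moved) (p x) q).mp
      (h.quot.mem_moved_iff.2 hx)
  have := h.quot.ncard_moved_add_card
  rw [hmoved, Set.ncard_univ] at this
  omega

/-- The flips of single fibers are conjugate to each other, so that all or none of them lie
in `W`; as `ζ` is the product of all of them, the parity of their number decides. -/
theorem invol_mem_iff_even [Finite X] (h : IsDescent ζ p σ σ' S T) {W : Subgroup (Perm X)}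
    (hWp : W ≤ fiberGroup p) (hcard : 2 * Nat.card W = Nat.card (fiberGroup p))
    (hnorm : gen σ S ≤ Subgroup.normalizer (W : Set (Perm X))) : ζ ∈ W ↔ Even (Nat.card Q) := by
  classical
  have := Finite.of_surjective p h.quot.surj
  have := Fintype.ofFinite Q
  have hparity := h.quot.flip_mem_iff_even fun _ hu _ hv =>
    mul_mem_iff_of_two_mul_card_eq hWp hcard hu hv
  have hall : ∀ q q', (h.quot.flip {q} ∉ W) = (h.quot.flip {q'} ∉ W) :=
    apply_eq_of_isPretransitive (σ := σ') (S := S) fun i hi q => by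
      rw [← h.quot.conj_flip (h.comm i hi) (h.semiconj i hi) q,
        ← Subgroup.mem_normalizer_iff.1 (hnorm (mem_gen hi))]
  obtain ⟨q, hq⟩ : ∃ q, h.quot.flip {q} ∉ W := by
    by_contra! hq
    have hle : fiberGroup p ≤ W := fun v hv => by
      have hfin := Set.toFinite (p '' {x | v x ≠ x})
      rw [← h.quot.flip_image_moved hv, ← hfin.coe_toFinset, hparity,
        Finset.filter_false_of_mem fun q _ => not_not.2 (hq q)]
      exact Even.zero
    have := Subgroup.card_le_of_le hle
    have : 0 < Nat.card W := Nat.card_pos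
    omega
  have huniv := hparity Finset.univ
  rwa [Finset.coe_univ, h.quot.flip_univ,
    Finset.filter_true_of_mem fun q' _ => (hall q q').mp hq, Finset.card_univ,
    ← Nat.card_eq_fintype_card] at huniv

theorem four_le_card_kern [Finite X] (h : IsDescent ζ p σ σ' S T) (hζ : ζ ∉ gen σ S)
    (hTA : T ⊆ A) (hAS : A ⊆ S) (hA : kern p σ A ≠ ⊥) : 4 ≤ Nat.card (kern p σ A) := by
  obtain ⟨v, hvA, hv⟩ := (Subgroup.bot_or_exists_ne_one _).resolve_left hA
  obtain ⟨i, hi, hiv⟩ : ∃ i ∈ S, ¬ Commute (σ i) v := by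
    by_contra! hc
    rcases h.eq_one_or_eq_invol hvA.2 hc with rfl | rfl
    · exact hv rfl
    · exact hζ (gen_mono hAS hvA.1)
  have hconj : σ i * v * (σ i)⁻¹ ∈ kern p σ A :=
    (Subgroup.mem_normalizer_iff.1 (h.gen_le_normalizer_kern hTA (mem_gen hi)) v).1 hvA
  have hnot : σ i * v * (σ i)⁻¹ ∉ Subgroup.zpowers v := by
    rw [Subgroup.mem_zpowers_iff]
    rintro ⟨k, hk⟩
    rcases Int.even_or_odd' k with ⟨m, rfl | rfl⟩
    · refine hv ((conj_eq_one_iff (a := σ i)).1 ?_)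
      rw [← hk, zpow_mul, zpow_two, h.quot.mul_self hvA.2, one_zpow]
    · refine hiv (mul_inv_eq_iff_eq_mul.1 ?_)
      rw [← hk, zpow_add_one, zpow_mul, zpow_two, h.quot.mul_self hvA.2, one_zpow, one_mul]
  have hlt : Subgroup.zpowers v < kern p σ A :=
    (Subgroup.zpowers_le.2 hvA).lt_of_ne fun he => hnot (he ▸ hconj)
  have hbot : ⊥ < Subgroup.zpowers v := bot_lt_iff_ne_bot.2 (Subgroup.zpowers_ne_bot.2 hv)
  have h1 := two_mul_card_le_of_lt hbot
  rw [Subgroup.card_bot] at h1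
  have := two_mul_card_le_of_lt hlt
  omega

theorem exists_two_mul_card_kern_le [Finite X] (h : IsDescent ζ p σ σ' S T) (hζ : ζ ∉ gen σ S)
    (hTS : T.card + 2 ≤ S.card) : ∃ A, T ⊆ A ∧ A ⊆ S ∧
      2 ^ (S.card - T.card) ≤ Nat.card (kern p σ A) ∧
      2 * Nat.card (kern p σ A) ≤ Nat.card (kern p σ S) := by
  have hST : 1 < (S \ T).card := by
    rw [Finset.card_sdiff_of_subset h.subset]
    omega
  obtain ⟨s₁, hs₁, s₂, hs₂, hne⟩ := Finset.one_lt_card.1 hST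
  rw [Finset.mem_sdiff] at hs₁ hs₂
  have hTA := Finset.subset_erase.2 ⟨h.subset, hs₂.2⟩
  have hsA : insert s₁ T ⊆ S.erase s₂ :=
    Finset.insert_subset (Finset.mem_erase.2 ⟨hne, hs₁.1⟩) hTA
  have hAS := Finset.erase_subset s₂ S
  have hfour := h.four_le_card_kern hζ (Finset.subset_insert s₁ T) (hsA.trans hAS)
    (bot_le.trans_lt (h.kern_lt_kern_insert subset_rfl h.subset hs₁.1 hs₁.2)).ne'
  refine ⟨S.erase s₂, hTA, hAS, ?_, two_mul_card_le_of_lt ?_⟩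
  · refine le_trans ?_ (h.card_kern_mul_le (Finset.subset_insert s₁ T) hsA hAS)
    rw [Finset.card_insert_of_notMem hs₁.2, Finset.card_erase_of_mem hs₂.1]
    calc 2 ^ (S.card - T.card) = 2 ^ 2 * 2 ^ (S.card - 1 - (T.card + 1)) := by
          rw [← pow_add]
          congr 1
          omega
      _ ≤ _ := Nat.mul_le_mul_right _ hfour
  · have := h.kern_lt_kern_insert hTA hAS hs₂.1 (Finset.notMem_erase s₂ S)
    rwa [Finset.insert_erase hs₂.1] at this

end Transitive

/-- If the induced group were transitive, then `kern p σ S` would have index two in `fiberGroup p`,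
and so would the group generated by `ζ` and a suitable `kern p σ A` of index four. Only the second
contains `ζ`, contrary to the parity criterion. -/
theorem not_isPretransitive [Finite X] (h : IsDescent ζ p σ σ' S T) (hζ : ζ ∉ gen σ S)
    (hX : 7 ≤ Nat.card X) (hS : S.card + 3 = Nat.card X) :
    ¬ MulAction.IsPretransitive (gen σ' S) Q := by
  intro htrans
  have hζ1 : ζ ≠ 1 := fun h1 => hζ (h1 ▸ one_mem _)
  have h2Q := h.two_mul_card_eq hζ1
  have := Finite.of_surjective p h.quot.surj
  have hTQ := h.irr'.card_add_ncard_range_le (col := fun _ => ()) fun _ _ _ => rfl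
  have : Nonempty Q := (Nat.card_pos_iff.1 (by omega : 0 < Nat.card Q)).1
  rw [Set.range_const, Set.ncard_singleton] at hTQ
  obtain ⟨A, hTA, hAS, hA, hAle⟩ := h.exists_two_mul_card_kern_le hζ (by omega)
  have hV : Nat.card (fiberGroup p) ≤ 4 * Nat.card (kern p σ A) := by
    refine le_trans ?_ (Nat.mul_le_mul_left 4 hA)
    refine Nat.le_of_mul_le_mul_right (h.quot.card_fiberGroup_mul_le.trans ?_)
      (show 0 < 2 ^ Nat.card Q by positivity)
    rw [show 4 = 2 ^ 2 by rfl, ← pow_add, ← pow_add]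
    exact Nat.pow_le_pow_right (by norm_num) (by omega)
  have hSV := h.two_mul_card_kern_le hζ
  have hodd := (h.invol_mem_iff_even kern_le_fiberGroup (by omega)
    (h.gen_le_normalizer_kern h.subset)).not.1 fun hmem => hζ hmem.1
  set W := kern p σ A ⊔ Subgroup.zpowers ζ
  have hζW : ζ ∈ W := Subgroup.mem_sup_right (Subgroup.mem_zpowers ζ)
  have hWp : W ≤ fiberGroup p :=
    sup_le kern_le_fiberGroup (Subgroup.zpowers_le.2 h.quot.invol_mem)
  have hWle : Nat.card W ≤ Nat.card (kern p σ A) * 2 := by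
    have hord : orderOf ζ = 2 :=
      orderOf_eq_prime ((pow_two ζ).trans (h.quot.mul_self h.quot.invol_mem)) hζ1
    rw [← hord, ← Nat.card_zpowers]
    exact card_sup_le fun a ha b hb =>
      h.quot.commute ha.2 (Subgroup.zpowers_le.2 h.quot.invol_mem hb)
  have hWge := two_mul_card_le_of_lt (H := kern p σ A) (K := W) <|
    le_sup_left.lt_of_ne fun he => hζ (gen_mono hAS (he ▸ hζW : ζ ∈ kern p σ A).1)
  exact hodd ((h.invol_mem_iff_even hWp (by omega) (h.gen_le_normalizer_kern_sup hTA)).1 hζW)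

end IsDescent

/-! ### The first generator -/

section PGroup

variable {X : Type*} [Finite X] {σ : ℕ → Perm X} {S : Finset ℕ} {x₀ : X}

theorem card_le_two_pow_of_isPGroup_two {P : Subgroup (Perm X)} (hP : IsPGroup 2 P)
    (hfix : ∀ g ∈ P, g x₀ = x₀) : Nat.card P ≤ 2 ^ (Nat.card X - 2) := by
  obtain ⟨k, hk⟩ := IsPGroup.iff_card.1 hP
  have : Nonempty X := ⟨x₀⟩
  have hstab := Subgroup.card_mul_index (MulAction.stabilizer (Perm X) x₀)
  rw [MulAction.index_stabilizer_of_transitive, Nat.card_perm, mul_comm,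
    ← Nat.mul_factorial_pred Nat.card_pos.ne'] at hstab
  have hdvd : 2 ^ k ∣ (Nat.card X - 1).factorial := by
    rw [← hk, ← Nat.eq_of_mul_eq_mul_left Nat.card_pos hstab]
    exact Subgroup.card_dvd_of_le fun g hg => hfix g hg
  rw [hk]
  refine Nat.pow_le_pow_right (by norm_num) ?_
  obtain h0 | h0 := eq_or_ne (Nat.card X - 1) 0
  · rw [h0, Nat.factorial_zero, Nat.dvd_one, Nat.pow_eq_one] at hdvd
    omega
  · have := (le_emultiplicity_of_pow_dvd hdvd).trans_lt (Nat.emultiplicity_two_factorial_lt h0)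
    have : k < Nat.card X - 1 := by exact_mod_cast this
    omega

theorem card_le_ncard_orbit {G : Subgroup (Perm X)} (hc : ∀ a ∈ G, ∀ b ∈ G, Commute a b) {y : X}
    (hy : ∀ x ∉ MulAction.orbit G y, ∀ g ∈ G, g x = x) :
    Nat.card G ≤ (MulAction.orbit G y).ncard := by
  rw [← Nat.card_coe_set_eq]
  refine Nat.card_le_card_of_injective
    (fun g : G => (⟨g • y, MulAction.mem_orbit y g⟩ : MulAction.orbit G y)) fun g g' hgg' => ?_
  have hgy : g.1 y = g'.1 y := congrArg Subtype.val hgg'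
  ext x
  by_cases hx : x ∈ MulAction.orbit G y
  · obtain ⟨a, rfl⟩ := hx
    have hga : ∀ g : G, g.1 (a.1 y) = a.1 (g.1 y) := fun g =>
      DFunLike.congr_fun (hc g g.2 a a.2).eq y
    exact (hga g).trans ((congrArg a.1 hgy).trans (hga g').symm)
  · rw [hy x hx g g.2, hy x hx g' g'.2]

theorem Irredundant.commute_of_card_gen_le (hσ : Irredundant σ S)
    (hcard : Nat.card (gen σ S) ≤ 2 ^ S.card) {i j : ℕ} (hi : i ∈ S) (hj : j ∈ S) :
    Commute (σ i) (σ j) := by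
  obtain rfl | hij := eq_or_ne i j
  · rfl
  have hsub : {i, j} ⊆ S := Finset.insert_subset hi (Finset.singleton_subset_iff.2 hj)
  have hle := hσ.card_gen_mul_le hsub
  have hge := (hσ.mono hsub).card_gen_mul_le (Finset.empty_subset _)
  have hS := Finset.card_le_card hsub
  rw [Finset.card_pair hij] at hle hge hS
  have hcard2 : Nat.card (gen σ {i, j}) = 2 ^ 2 := by
    refine le_antisymm (Nat.le_of_mul_le_mul_right ((hle.trans hcard).trans ?_)
      (show 0 < 2 ^ (S.card - 2) by positivity)) ((Nat.le_mul_of_pos_left _ Nat.card_pos).trans hge)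
    rw [← pow_add, Nat.add_sub_cancel' hS]
  have := IsPGroup.isMulCommutative_of_card_eq_prime_sq hcard2
  exact congrArg Subtype.val <| mul_comm' (⟨σ i, mem_gen (by simp)⟩ : gen σ {i, j})
    ⟨σ j, mem_gen (by simp)⟩

theorem Irredundant.eq_of_fixed {C : Type*} (hσ : Irredundant σ S)
    (hcard : Nat.card X ≤ S.card + 2) (hx₀ : ∀ i ∈ S, σ i x₀ = x₀) {f : X → C}
    (hf : ∀ i ∈ S, σ i ∈ fiberGroup f) {x y : X} (hx : x ≠ x₀) (hy : y ≠ x₀) : f x = f y := by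
  classical
  by_contra hxy
  have hle := hσ.card_add_ncard_range_le (col := fun z => if z = x₀ then none else some (f z))
    fun i hi z => by
      have hiff : σ i z = x₀ ↔ z = x₀ := by
        rw [← (σ i).injective.eq_iff (a := z), hx₀ i hi]
      simp only [hiff, hf i hi z]
  have : 2 < (Set.range fun z => if z = x₀ then none else some (f z)).ncard :=
    (Set.two_lt_ncard_iff).2 ⟨none, some (f x), some (f y), ⟨x₀, if_pos rfl⟩, ⟨x, if_neg hx⟩,
      ⟨y, if_neg hy⟩, by simp, by simp, by simpa using hxy⟩
  omega

/-- A two-group would have order at most `2 ^ |S|`, hence would be abelian, and an abelian group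
acts regularly on the remaining points. -/
theorem Irredundant.not_isPGroup_two (hσ : Irredundant σ S) (hcard : Nat.card X ≤ S.card + 2)
    (hS : 2 ≤ S.card) (hx₀ : ∀ i ∈ S, σ i x₀ = x₀) : ¬ IsPGroup 2 (gen σ S) := by
  intro hP
  have hfix : ∀ g ∈ gen σ S, g x₀ = x₀ := fun g hg =>
    gen_le (H := MulAction.stabilizer (Perm X) x₀) hx₀ hg
  have hle := (card_le_two_pow_of_isPGroup_two hP hfix).trans
    (Nat.pow_le_pow_right (by norm_num) (Nat.sub_le_of_le_add hcard))
  have hcomm : ∀ a ∈ gen σ S, ∀ b ∈ gen σ S, Commute a b := fun a ha b hb =>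
    commute_of_mem_gen (fun i hi => (commute_of_mem_gen (fun j hj =>
      hσ.commute_of_card_gen_le hle hj hi) hb).symm) ha
  obtain ⟨i, hi⟩ := Finset.card_pos.1 (by omega : 0 < S.card)
  obtain ⟨y, hy⟩ : ∃ y, y ≠ x₀ := by
    by_contra! h
    exact hσ.ne_one hi (Perm.ext fun x => (h _).trans (h _).symm)
  have hx₀y : x₀ ∉ MulAction.orbit (gen σ S) y := by
    rintro ⟨g, hg⟩
    exact hy (g.1.injective (hg.trans (hfix g g.2).symm))
  have horbit := card_le_ncard_orbit hcomm (y := y) fun x hx => by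
    obtain rfl : x = x₀ := by
      by_contra hxx₀
      rw [← MulAction.orbit_eq_iff] at hx
      exact hx (hσ.eq_of_fixed hcard hx₀ (fun i hi => mem_fiberGroup_orbit (mem_gen hi)) hxx₀ hy)
    exact hfix
  have hlt : (MulAction.orbit (gen σ S) y).ncard < Nat.card X :=
    Set.ncard_lt_card fun h => hx₀y (h ▸ Set.mem_univ x₀)
  have hge := hσ.card_gen_mul_le (Finset.empty_subset S)
  rw [Finset.card_empty, Nat.sub_zero] at hge
  have hpos : 2 ^ S.card ≤ Nat.card (gen σ S) := (Nat.le_mul_of_pos_left _ Nat.card_pos).trans hge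
  obtain ⟨s, hs⟩ := Nat.exists_eq_add_of_le' hS
  have := (s + 1).lt_two_pow_self
  rw [hs, pow_succ _ (s + 1)] at hpos
  omega

end PGroup

section FirstGenerator

theorem IsInvolQuotient.eq_swap {X Q : Type*} [DecidableEq X] {ζ : Perm X} {p : X → Q}
    (hp : IsInvolQuotient ζ p) {x₀ : X} (h : ∀ y, p y ≠ p x₀ → ζ y = y) :
    ζ = swap x₀ (ζ x₀) := by
  ext y
  rw [swap_apply_def]
  split_ifs with h1 h2
  · rw [h1]
  · rw [h2, hp.invol]
  · refine h y fun e => ?_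
    rcases (hp.fiber x₀ y).1 e.symm with e | e
    · exact h1 e
    · exact h2 e

theorem IsSharpDescent.isPGroup_two {X Q : Type*} [Finite X] {ζ : Perm X} {p : X → Q}
    {σ : ℕ → Perm X} {σ' : ℕ → Perm Q} {S T : Finset ℕ} (h : IsSharpDescent ζ p σ σ' S T)
    (hmoved : ∀ q, q ∈ h.quot.moved) : IsPGroup 2 (gen σ' T) := by
  rintro ⟨g', hg'⟩
  obtain ⟨g, hg, hgg'⟩ := exists_mem_gen_semiconj (h.semiconj_of_subset h.subset) hg'
  obtain ⟨k, hk⟩ := h.exists_pow_apply_eq (gen_mono h.subset hg) hgg'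
  exact ⟨k, Subtype.ext (Perm.ext fun q => hk q (hmoved q))⟩

/-- The descent is not transitive, hence it is sharp and has a fixed fiber; if `ζ` moved a point
outside of it, then it would move all points and the induced group would be a two-group. -/
theorem IsDescent.invol_eq_swap {X Q : Type*} [Finite X] [DecidableEq X] {ζ : Perm X} {p : X → Q}
    {σ : ℕ → Perm X} {σ' : ℕ → Perm Q} {S T : Finset ℕ} (h : IsDescent ζ p σ σ' S T)
    (hζ : ζ ∉ gen σ S) (hX : 7 ≤ Nat.card X) (hS : S.card + 3 = Nat.card X) :
    ∃ x, ζ x ≠ x ∧ ζ = swap x (ζ x) := by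
  have := Finite.of_surjective p h.quot.surj
  have hlt := h.card_add_card_lt hζ
  have hTQ : T.card + 2 ≤ Nat.card Q := by
    obtain ⟨q₁, q₂, hne⟩ := exists_orbit_ne (h.not_isPretransitive hζ hX hS)
    have hle := h.irr'.card_add_ncard_range_le (col := MulAction.orbit (gen σ' S))
      fun i hi => mem_fiberGroup_orbit (mem_gen (h.subset hi))
    have : 1 < (Set.range (MulAction.orbit (gen σ' S) : Q → Set Q)).ncard :=
      (Set.one_lt_ncard_iff).2 ⟨_, _, ⟨q₁, rfl⟩, ⟨q₂, rfl⟩, hne⟩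
    omega
  have hsharp : IsSharpDescent ζ p σ σ' S T := ⟨h, hζ, by omega⟩
  obtain ⟨_, ⟨x, hx, rfl⟩, hfix⟩ := hsharp.exists_fixed_fiber
  refine ⟨x, hx, h.quot.eq_swap fun y hy => ?_⟩
  by_contra hζy
  have hmoved : ∀ q, q ∈ h.quot.moved := fun q => by
    obtain rfl | hq := eq_or_ne q (p x)
    · exact h.quot.mem_moved_iff.2 hx
    · exact (h.irr'.eq_of_fixed (by omega) (fun i hi => hfix i (h.subset hi))
        (fun i hi => h.mem_fiberGroup_moved (h.subset hi)) hy hq).mp (h.quot.mem_moved_iff.2 hζy)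
  have := h.quot.card_le_two_mul
  exact h.irr'.not_isPGroup_two (by omega) (by omega) (fun i hi => hfix i (h.subset hi))
    (hsharp.isPGroup_two hmoved)

theorem Irredundant.exists_swap_eq_zero {X : Type*} [Finite X] [DecidableEq X] {σ : ℕ → Perm X}
    {r : ℕ} (hσ : Irredundant σ (Finset.range r)) (hX : 7 ≤ Nat.card X)
    (hr : r + 1 = Nat.card X) : ∃ x y, x ≠ y ∧ σ 0 = swap x y := by
  have hsub : Finset.Ico 2 r ⊆ Finset.range r := fun i hi =>
    Finset.mem_range.2 (Finset.mem_Ico.1 hi).2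
  have h0 : 0 ∈ Finset.range r := Finset.mem_range.2 (by omega)
  obtain ⟨Q, _, p, σ', T, h⟩ := exists_isDescent (hσ.involutive h0) (hσ.mono hsub) fun i hi =>
    (hσ.comm 0 h0 i (hsub hi) (by simpa using (Finset.mem_Ico.1 hi).1)).symm
  obtain ⟨x, hx, hswap⟩ := h.invol_eq_swap (hσ.notMem_gen hsub h0 (by simp)) hX
    (by rw [Nat.card_Ico]; omega)
  exact ⟨x, σ 0 x, hx.symm, hswap⟩

end FirstGenerator

/-! ### Paths -/

section Perm

variable {X : Type*}

theorem apply_comm_of_commute {g k : Perm X} (h : Commute g k) (x : X) : g (k x) = k (g x) :=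
  DFunLike.congr_fun h.eq x

theorem IsInvolQuotient.eq_of_apply_eq {Q : Type*} {ζ : Perm X} {p : X → Q}
    (hp : IsInvolQuotient ζ p) {H : Subgroup (Perm X)} {a : X}
    (hmoved : ∀ x, ζ x ≠ x → x ∈ MulAction.orbit H a) {u v : Perm X} (hu : u ∈ fiberGroup p)
    (hv : v ∈ fiberGroup p) (hcu : ∀ k ∈ H, Commute k u) (hcv : ∀ k ∈ H, Commute k v)
    (huv : u a = v a) : u = v := by
  ext x
  by_cases hx : ζ x = x
  · have hfix : ∀ g ∈ fiberGroup p, g x = x := fun g hg => by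
      simpa only [hx, or_self] using hp.mem_fiberGroup_iff.1 hg x
    rw [hfix u hu, hfix v hv]
  · obtain ⟨k, rfl⟩ := hmoved x hx
    exact (apply_comm_of_commute (hcu k k.2).symm a).trans <|
      (congrArg k.1 huv).trans (apply_comm_of_commute (hcv k k.2) a)

variable [DecidableEq X]

theorem fix_or_swap_of_commute_swap {g : Perm X} {a b : X} (hab : a ≠ b)
    (h : Commute g (swap a b)) : (g a = a ∧ g b = b) ∨ (g a = b ∧ g b = a) := by
  have hgb := apply_comm_of_commute h a
  rw [swap_apply_left] at hgb
  by_cases ha : g a = a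
  · exact Or.inl ⟨ha, by rw [hgb, ha, swap_apply_left]⟩
  by_cases hb : g a = b
  · exact Or.inr ⟨hb, by rw [hgb, hb, swap_apply_right]⟩
  · rw [swap_apply_of_ne_of_ne ha hb] at hgb
    exact absurd (g.injective hgb).symm hab

theorem apply_mem_pair_of_commute_swap {g : Perm X} {a b x : X} (hab : a ≠ b)
    (h : Commute g (swap a b)) (hx : x ∈ ({a, b} : Finset X)) : g x ∈ ({a, b} : Finset X) := by
  rw [Finset.mem_insert, Finset.mem_singleton] at hx
  rcases fix_or_swap_of_commute_swap hab h with ⟨ha, hb⟩ | ⟨ha, hb⟩ <;>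
    rcases hx with rfl | rfl <;> simp [ha, hb]

theorem commute_swap_swap {a b c d : X} (hc : c ∉ ({a, b} : Finset X))
    (hd : d ∉ ({a, b} : Finset X)) : Commute (swap a b) (swap c d) := by
  simp only [Finset.mem_insert, Finset.mem_singleton, not_or] at hc hd
  rw [commute_iff_eq, mul_swap_eq_swap_mul, swap_apply_of_ne_of_ne hc.1 hc.2,
    swap_apply_of_ne_of_ne hd.1 hd.2]

theorem commute_swap_apply {g : Perm X} (hg : Function.Involutive g) (x : X) :
    Commute g (swap x (g x)) := by
  rw [commute_iff_eq, mul_swap_eq_swap_mul, hg, swap_comm]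

theorem swap_apply_mem {A : Finset X} {a b x : X} (ha : a ∈ A) (hb : b ∈ A) (hx : x ∈ A) :
    swap a b x ∈ A := by
  rw [swap_apply_def]
  split_ifs <;> assumption

theorem swap_apply_apply_mem {H : Subgroup (Perm X)} {g : Perm X} {x y : X} (hg : g ∈ H)
    (hxy : swap x y ∈ H) : swap (g x) (g y) ∈ H := by
  rw [swap_apply_apply]
  exact mul_mem (mul_mem hg hxy) (inv_mem hg)

theorem commute_swap_mul_swap_apply {g : Perm X} (hg : Function.Involutive g) {a b : X}
    (h : Commute (swap a b) (swap (g a) (g b))) : Commute g (swap a b * swap (g a) (g b)) := by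
  rw [commute_iff_eq, ← mul_assoc, mul_swap_eq_swap_mul g a b, mul_assoc,
    mul_swap_eq_swap_mul g (g a) (g b), hg, hg, ← mul_assoc, ← h.eq]

theorem mem_orbit_of_swap_mul_swap_apply_ne {H : Subgroup (Perm X)} {g : Perm X} {a b x : X}
    (hg : g ∈ H) (hab : swap a b ∈ H) (hx : (swap a b * swap (g a) (g b)) x ≠ x) :
    x ∈ MulAction.orbit H a := by
  contrapose! hx
  have ha : ∀ k ∈ H, x ≠ k a := fun k hk e => hx ⟨⟨k, hk⟩, e.symm⟩
  have hb : ∀ k ∈ H, x ≠ k b := fun k hk => by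
    simpa only [Perm.mul_apply, swap_apply_left] using ha _ (mul_mem hk hab)
  rw [Perm.mul_apply, swap_apply_of_ne_of_ne (ha g hg) (hb g hg),
    swap_apply_of_ne_of_ne (a := a) (b := b) (ha 1 (one_mem H))
      (hb 1 (one_mem H))]

end Perm

section FixedPoints

variable {X : Type*} [DecidableEq X] {F : Finset X}

/-- The coloring in which each point of `F` has a color of its own, and the other points share one
more color. It is invariant under the permutations that fix `F` pointwise. -/
def discreteOn (F : Finset X) (x : X) : Option X := if x ∈ F then some x else none

theorem mem_fiberGroup_discreteOn {g : Perm X} (hg : ∀ x ∈ F, g x = x) :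
    g ∈ fiberGroup (discreteOn F) := fun x => by
  by_cases hx : x ∈ F
  · rw [hg x hx]
  · have hgx : g x ∉ F := fun hgx => hx (g.injective (hg _ hgx) ▸ hgx)
    simp only [discreteOn, hx, hgx, if_false]

theorem card_lt_ncard_range_discreteOn [Finite X] {y : X} (hy : y ∉ F) :
    F.card < (Set.range (discreteOn F)).ncard := by
  have hcard : (insert none (F.image some)).card = F.card + 1 := by
    rw [Finset.card_insert_of_notMem (by simp),
      Finset.card_image_of_injective _ (Option.some_injective X)]
  rw [Nat.lt_iff_add_one_le, ← hcard, ← Set.ncard_coe_finset]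
  refine Set.ncard_le_ncard fun c hc => ?_
  rw [Finset.mem_coe, Finset.mem_insert, Finset.mem_image] at hc
  obtain rfl | ⟨x, hx, rfl⟩ := hc
  · exact ⟨y, if_neg hy⟩
  · exact ⟨x, if_pos hx⟩

end FixedPoints

theorem Irredundant.card_add_card_lt {X : Type*} [Finite X] {σ : ℕ → Perm X} {S : Finset ℕ}
    {F : Finset X} (hσ : Irredundant σ S) (hF : ∀ i ∈ S, ∀ x ∈ F, σ i x = x) {y : X} (hy : y ∉ F) :
    S.card + F.card < Nat.card X := by
  classical
  have := hσ.card_add_ncard_range_le fun i hi => mem_fiberGroup_discreteOn (hF i hi)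
  have := card_lt_ncard_range_discreteOn hy
  omega

section Path

variable {X : Type*} [DecidableEq X] {σ : ℕ → Perm X} {j : ℕ} {x : ℕ → X}

/-- The first `j` permutations are the adjacent transpositions of the path with the distinct
vertices `x 0, …, x j`. -/
structure IsPath (σ : ℕ → Perm X) (j : ℕ) (x : ℕ → X) : Prop where
  injOn : Set.InjOn x (Set.Iic j)
  eq_swap : ∀ i < j, σ i = swap (x i) (x (i + 1))

namespace IsPath

theorem ne (hx : IsPath σ j x) {i k : ℕ} (hi : i ≤ j) (hk : k ≤ j) (hik : i ≠ k) : x i ≠ x k :=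
  fun e => hik (hx.injOn hi hk e)

theorem mono (hx : IsPath σ j x) {k : ℕ} (hk : k ≤ j) : IsPath σ k x :=
  ⟨hx.injOn.mono (Set.Iic_subset_Iic.2 hk), fun i hi => hx.eq_swap i (hi.trans_le hk)⟩

theorem update (hx : IsPath σ j x) {y : X} (hy : ∀ i ≤ j, x i ≠ y) (hσ : σ j = swap (x j) y) :
    IsPath σ (j + 1) (Function.update x (j + 1) y) := by
  have hold : ∀ i ≤ j, Function.update x (j + 1) y i = x i := fun i hi =>
    Function.update_of_ne (by omega) _ _
  refine ⟨fun i hi k hk hik => ?_, fun i hi => ?_⟩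
  · obtain hi | rfl := Nat.le_succ_iff.1 hi <;> obtain hk | rfl := Nat.le_succ_iff.1 hk
    · rw [hold i hi, hold k hk] at hik
      exact hx.injOn hi hk hik
    · rw [hold i hi, Function.update_self] at hik
      exact absurd hik (hy i hi)
    · rw [hold k hk, Function.update_self] at hik
      exact absurd hik.symm (hy k hk)
    · rfl
  · obtain hi | rfl := Nat.lt_succ_iff_lt_or_eq.1 hi
    · rw [hold i hi.le, hold (i + 1) hi, hx.eq_swap i hi]
    · rw [hold i le_rfl, Function.update_self, hσ]

/-- If `g` exchanged the ends of an edge, then it could not preserve an adjacent edge. -/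
theorem apply_eq_of_commute (hx : IsPath σ j x) (hj : 2 ≤ j) {g : Perm X}
    (h : ∀ i < j, Commute g (σ i)) : ∀ i ≤ j, g (x i) = x i := by
  have hedge : ∀ i < j, (g (x i) = x i ∧ g (x (i + 1)) = x (i + 1)) ∨
      (g (x i) = x (i + 1) ∧ g (x (i + 1)) = x i) := fun i hi =>
    fix_or_swap_of_commute_swap (hx.ne hi.le hi i.succ_ne_self.symm) (hx.eq_swap i hi ▸ h i hi)
  have hstraight : ∀ i < j, g (x i) = x i ∧ g (x (i + 1)) = x (i + 1) := fun i hi => by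
    refine (hedge i hi).resolve_right fun ⟨h1, h2⟩ => ?_
    obtain hi' | hi' := Nat.lt_or_ge (i + 1) j
    · rcases hedge (i + 1) hi' with ⟨h3, -⟩ | ⟨h3, -⟩
      · exact hx.ne (by omega) (by omega) (by omega) (h2.symm.trans h3)
      · exact hx.ne (by omega) (by omega) (by omega) (h2.symm.trans h3)
    · obtain ⟨k, rfl⟩ : ∃ k, i = k + 1 := ⟨i - 1, by omega⟩
      rcases hedge k (by omega) with ⟨-, h3⟩ | ⟨-, h3⟩
      · exact hx.ne (by omega) (by omega) (by omega) (h1.symm.trans h3)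
      · exact hx.ne (by omega) (by omega) (by omega) (h1.symm.trans h3)
  intro i hi
  obtain hi | rfl := hi.lt_or_eq
  · exact (hstraight i hi).1
  · obtain ⟨k, rfl⟩ : ∃ k, i = k + 1 := ⟨i - 1, by omega⟩
    exact (hstraight k k.lt_succ_self).2

end IsPath

end Path

/-! ### Maximal families -/

section Maximal

/-- A transitive irredundant family of length one less than the degree, in which initial and final
segments separated by a gap generate subgroups with trivial intersection. Families of this kind are
induced on the orbits of a central involution interchanging two blocks. -/
structure IsMaximal {X : Type*} (σ : ℕ → Perm X) (r : ℕ) : Prop where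
  irr : Irredundant σ (Finset.range r)
  card : r + 1 = Nat.card X
  seven_le : 7 ≤ Nat.card X
  isPretransitive : MulAction.IsPretransitive (gen σ (Finset.range r)) X
  inf_eq_bot : ∀ j, gen σ (Finset.range (j + 1)) ⊓ gen σ (Finset.Ico (j + 2) r) = ⊥

namespace IsMaximal

variable {X : Type*} {σ : ℕ → Perm X} {r j : ℕ}

theorem commute (h : IsMaximal σ r) {i k : ℕ} (hk : k < r) (hik : i + 2 ≤ k) :
    Commute (σ i) (σ k) :=
  h.irr.comm i (Finset.mem_range.2 (by omega)) k (Finset.mem_range.2 hk) hik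

theorem involutive (h : IsMaximal σ r) {i : ℕ} (hi : i < r) : Function.Involutive (σ i) :=
  h.irr.involutive (Finset.mem_range.2 hi)

theorem commute_of_mem_gen_Ico (h : IsMaximal σ r) {g k : Perm X}
    (hg : g ∈ gen σ (Finset.Ico (j + 2) r)) (hk : k ∈ gen σ (Finset.range (j + 1))) :
    Commute k g :=
  commute_of_mem_gen (fun i hi => (commute_of_mem_gen (fun l hl => by
    rw [Finset.mem_Ico] at hl
    rw [Finset.mem_range] at hi
    exact (h.commute hl.2 (by omega)).symm) hg).symm) hk

theorem exists_apply_notMem (h : IsMaximal σ r) {A : Finset X} (hA : A.Nonempty)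
    (hcard : A.card < Nat.card X) : ∃ i < r, ∃ x ∈ A, σ i x ∉ A := by
  by_contra! hinv
  have := h.isPretransitive
  obtain ⟨a, ha⟩ := hA
  have hcol : ∀ i ∈ Finset.range r, σ i ∈ fiberGroup (· ∈ A) := fun i hi x => by
    have hi := Finset.mem_range.1 hi
    exact propext ⟨fun hx => h.involutive hi x ▸ hinv i hi _ hx, hinv i hi x⟩
  have huniv : (A : Set X) = Set.univ :=
    Set.eq_univ_of_forall fun y => (apply_eq_of_isPretransitive hcol a y).mp ha
  rw [← Set.ncard_univ, ← huniv, Set.ncard_coe_finset] at hcard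
  exact lt_irrefl _ hcard

/-- Otherwise `g * k` is a nontrivial involution outside the group generated by the remaining
generators, and these leave too many points fixed. -/
theorem eq_of_forall_apply_eq [Finite X] (h : IsMaximal σ r) {g k : Perm X}
    (hg : g ∈ gen σ (Finset.range (j + 1))) (hk : k ∈ gen σ (Finset.range (j + 1)))
    (hg2 : g * g = 1) (hk2 : k * k = 1) (hgk : Commute g k) {F : Finset X} (hF : j + 2 ≤ F.card)
    (hgkF : ∀ x ∈ F, g x = k x) (hfix : ∀ i, j + 2 ≤ i → i < r → ∀ x ∈ F, σ i x = x) :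
    g = k := by
  classical
  by_contra hne
  have hk' : k = k⁻¹ := (inv_eq_of_mul_eq_one_left hk2).symm
  have hne1 : g * k ≠ 1 := fun e => hne ((eq_inv_of_mul_eq_one_left e).trans hk'.symm)
  have hmem : g * k ∈ gen σ (Finset.range (j + 1)) := mul_mem hg hk
  have hkinv : ∀ x, k (k x) = x := fun x => DFunLike.congr_fun hk2 x
  obtain ⟨y, hy⟩ : ∃ y, (g * k) y ≠ y := by
    by_contra! hfix
    exact hne1 (Perm.ext hfix)
  have hFfix : ∀ x ∈ F, (g * k) x = x := fun x hx => by
    rw [hgk.eq, Perm.mul_apply, hgkF x hx, hkinv]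
  have hsub : Finset.Ico (j + 2) r ⊆ Finset.range r := fun i hi =>
    Finset.mem_range.2 (Finset.mem_Ico.1 hi).2
  have hlt := (h.irr.mono hsub).card_add_ncard_range_lt (ζ := g * k)
    (fun x => DFunLike.congr_fun
      (show g * k * (g * k) = 1 by rw [hgk.symm.mul_mul_mul_comm, hg2, hk2, one_mul]) x)
    (fun hm => hne1 (Subgroup.mem_bot.1 (h.inf_eq_bot j ▸ Subgroup.mem_inf.2 ⟨hmem, hm⟩)))
    (fun i hi => (h.commute_of_mem_gen_Ico (mem_gen hi) hmem).symm)
    (mem_fiberGroup_discreteOn hFfix)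
    (fun i hi => mem_fiberGroup_discreteOn
      (hfix i (Finset.mem_Ico.1 hi).1 (Finset.mem_Ico.1 hi).2))
  have := card_lt_ncard_range_discreteOn (F := F) (y := y) fun hyF => hy (hFfix y hyF)
  rw [Nat.card_Ico] at hlt
  have := h.card
  omega

theorem apply_notMem (h : IsMaximal σ r) {A : Finset X} (hA : A.card < Nat.card X) {a : X}
    (ha : a ∈ A) (hpres : ∀ i < r, i ≠ j → ∀ x ∈ A, σ i x ∈ A)
    (hj : ∀ x ∈ A, x ≠ a → σ j x = x) : σ j a ∉ A := by
  obtain ⟨i, hi, x, hx, hix⟩ := h.exists_apply_notMem ⟨a, ha⟩ hA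
  obtain rfl : i = j := by
    by_contra hij
    exact hix (hpres i hi hij x hx)
  obtain rfl : x = a := by
    by_contra hxa
    exact hix (by rwa [hj x hx hxa])
  exact hix

variable [DecidableEq X]

theorem eq_swap [Finite X] (h : IsMaximal σ r) (hjr : j < r) {A : Finset X} (hA : A.card = j + 1)
    {a b : X} (ha : a ∈ A) (hb : b ∈ A) (hba : b ≠ a) (hja : σ j a ∉ A)
    (hfix : ∀ i, j + 2 ≤ i → i < r → ∀ x ∈ A, σ i x = x) (hj : ∀ x ∈ A, x ≠ a → σ j x = x)
    (hswap : swap b a ∈ gen σ (Finset.range j)) : σ j = swap a (σ j a) := by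
  have hjm : σ j ∈ gen σ (Finset.range (j + 1)) := mem_gen (Finset.self_mem_range_succ j)
  have hswap' := gen_mono (Finset.range_subset_range.2 j.le_succ) hswap
  have hbs := swap_apply_apply_mem hjm hswap'
  rw [hj b hb hba] at hbs
  have has := SubmonoidClass.swap_mem_trans _ (swap_comm b a ▸ hswap') hbs
  refine h.eq_of_forall_apply_eq hjm has (h.irr.mul_self j (Finset.mem_range.2 hjr))
    (swap_mul_self _ _) (commute_swap_apply (h.involutive hjr) a)
    (F := insert (σ j a) A) (by rw [Finset.card_insert_of_notMem hja, hA]) ?_ ?_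
  · intro x hx
    obtain rfl | hx := Finset.mem_insert.1 hx
    · rw [swap_apply_right, h.involutive hjr]
    · obtain rfl | hxa := eq_or_ne x a
      · rw [swap_apply_left]
      · rw [swap_apply_of_ne_of_ne hxa (ne_of_mem_of_not_mem hx hja), hj x hx hxa]
  · intro i hi hir x hx
    obtain rfl | hx := Finset.mem_insert.1 hx
    · rw [← apply_comm_of_commute (h.commute hir hi), hfix i hi hir a ha]
    · exact hfix i hi hir x hx

end IsMaximal

end Maximal

section SecondGenerator

variable {X : Type*} {σ : ℕ → Perm X} {r : ℕ} {a b : X}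

namespace IsMaximal

theorem kern_eq_bot {Q : Type*} {p : X → Q} {w : Perm X} (h : IsMaximal σ r)
    (hp : IsInvolQuotient w p) (hw : w ∈ gen σ (Finset.range 2))
    (hc : ∀ k ∈ gen σ (Finset.range 2), Commute k w)
    (hmoved : ∀ x, w x ≠ x → x ∈ MulAction.orbit (gen σ (Finset.range 2)) a) :
    kern p σ (Finset.Ico 3 r) = ⊥ := by
  refine eq_bot_iff.2 fun v hv => ?_
  obtain ⟨hvS, hv⟩ := Subgroup.mem_inf.1 hv
  have hcv : ∀ k ∈ gen σ (Finset.range 2), Commute k v := fun k => h.commute_of_mem_gen_Ico hvS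
  rcases hp.mem_fiberGroup_iff.1 hv a with ha | ha
  · exact hp.eq_of_apply_eq hmoved hv (one_mem _) hcv (fun k _ => Commute.one_right k) ha
  · rw [← h.inf_eq_bot 1]
    refine Subgroup.mem_inf.2 ⟨?_, hvS⟩
    rwa [hp.eq_of_apply_eq hmoved hv hp.invol_mem hcv hc ha]

/-- In the descent along `w`, the generators from the third one on would stay irredundant, with the
images of `a` and `σ 1 a` as two fixed points. -/
theorem apply_one_of_central [Finite X] (h : IsMaximal σ r) {w : Perm X}
    (hw : w ∈ gen σ (Finset.range 2)) (hw2 : Function.Involutive w)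
    (hc : ∀ k ∈ gen σ (Finset.range 2), Commute k w) (ha : w a ≠ a)
    (hmoved : ∀ x, w x ≠ x → x ∈ MulAction.orbit (gen σ (Finset.range 2)) a)
    (hfix : ∀ i ∈ Finset.Ico 3 r, σ i a = a ∨ σ i a = w a) : σ 1 a = a ∨ σ 1 a = w a := by
  classical
  by_contra! hcon
  have hsub : Finset.Ico 3 r ⊆ Finset.range r := fun i hi =>
    Finset.mem_range.2 (Finset.mem_Ico.1 hi).2
  have h1 : σ 1 ∈ gen σ (Finset.range 2) := mem_gen (by simp)
  obtain ⟨Q, _, p, σ', T, L⟩ := exists_isDescent hw2 (h.irr.mono hsub) fun i hi =>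
    (h.commute_of_mem_gen_Ico (mem_gen hi) hw).symm
  have hkern := L.two_pow_le_card_kern L.subset subset_rfl
  rw [h.kern_eq_bot L.quot hw hc hmoved, Subgroup.card_bot, ← pow_zero 2,
    Nat.pow_le_pow_iff_right (by norm_num), Nat.card_Ico] at hkern
  set F : Finset Q := {p a, p (σ 1 a)} with hF
  have hFcard : F.card = 2 := Finset.card_pair fun e =>
    ((L.quot.fiber a _).1 e).elim hcon.1 hcon.2
  have hFmoved : (F : Set Q) ⊆ L.quot.moved := by
    rw [hF, Finset.coe_pair, Set.pair_subset_iff, L.quot.mem_moved_iff, L.quot.mem_moved_iff,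
      ← apply_comm_of_commute (hc _ h1)]
    exact ⟨ha, fun e => ha ((σ 1).injective e)⟩
  have hFfix : ∀ i ∈ T, ∀ q ∈ F, σ' i q = q := fun i hi q hq => by
    have hi := L.subset hi
    rw [hF, Finset.mem_insert, Finset.mem_singleton] at hq
    rcases hq with rfl | rfl <;> rw [← (L.semiconj i hi).eq, eq_comm, L.quot.fiber]
    · exact hfix i hi
    · rw [← apply_comm_of_commute (h.commute_of_mem_gen_Ico (mem_gen hi) h1),
        ← apply_comm_of_commute (hc _ h1), (σ 1).injective.eq_iff, (σ 1).injective.eq_iff]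
      exact hfix i hi
  have hQ := L.quot.ncard_moved_add_card
  have hmoved2 := (Set.ncard_coe_finset F).symm.trans_le (Set.ncard_le_ncard hFmoved)
  have hQ2 := L.quot.card_le_two_mul
  have hX := h.card
  have hX7 := h.seven_le
  obtain ⟨q, hq⟩ : ∃ q, q ∉ F := by
    by_contra! hall
    have := Set.ncard_coe_finset F
    rw [Set.eq_univ_of_forall hall, Set.ncard_univ] at this
    omega
  have := L.irr'.card_add_card_lt hFfix hq
  omega

variable [DecidableEq X]

theorem commute_zero (h : IsMaximal σ r) (h0 : σ 0 = swap a b) {i : ℕ} (hi : i ≠ 1)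
    (hir : i < r) : Commute (σ i) (swap a b) := by
  rw [← h0]
  obtain rfl | hi0 := Nat.eq_zero_or_pos i
  · exact Commute.refl _
  · exact (h.commute hir (by omega)).symm

theorem apply_mem_or_apply_mem [Finite X] (h : IsMaximal σ r) (hab : a ≠ b)
    (h0 : σ 0 = swap a b) : σ 1 a ∈ ({a, b} : Finset X) ∨ σ 1 b ∈ ({a, b} : Finset X) := by
  by_contra! hcon
  have hr := h.card
  have hr7 := h.seven_le
  have hm0 : swap a b ∈ gen σ (Finset.range 2) := h0 ▸ mem_gen (by simp)
  have hm1 : σ 1 ∈ gen σ (Finset.range 2) := mem_gen (by simp)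
  have hcomm := commute_swap_swap hcon.1 hcon.2
  simp only [Finset.mem_insert, Finset.mem_singleton, not_or] at hcon
  obtain ⟨⟨hca, hcb⟩, hda, -⟩ := hcon
  have hwa : (swap a b * swap (σ 1 a) (σ 1 b)) a = b := by
    rw [Perm.mul_apply, swap_apply_of_ne_of_ne (Ne.symm hca) (Ne.symm hda), swap_apply_left]
  have hw2 : swap a b * swap (σ 1 a) (σ 1 b) * (swap a b * swap (σ 1 a) (σ 1 b)) = 1 := by
    rw [hcomm.symm.mul_mul_mul_comm, swap_mul_self, swap_mul_self, one_mul]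
  have hcentral : ∀ k ∈ gen σ (Finset.range 2), Commute k (swap a b * swap (σ 1 a) (σ 1 b)) :=
    fun k => commute_of_mem_gen fun i hi => by
      obtain rfl | rfl : i = 0 ∨ i = 1 := by
        rw [Finset.mem_range] at hi
        omega
      · rw [h0]
        exact (Commute.refl _).mul_right hcomm
      · exact commute_swap_mul_swap_apply (h.involutive (by omega)) hcomm
  have hone := h.apply_one_of_central (mul_mem hm0 (swap_apply_apply_mem hm1 hm0))
    (fun x => DFunLike.congr_fun hw2 x) hcentral (by rwa [hwa, ne_comm])
    (fun x => mem_orbit_of_swap_mul_swap_apply_ne hm1 hm0)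
  rw [hwa] at hone
  refine (hone fun i hi => ?_).elim hca hcb
  rw [Finset.mem_Ico] at hi
  exact (fix_or_swap_of_commute_swap hab (h.commute_zero h0 (by omega) hi.2)).imp And.left And.left

theorem apply_one_eq (h : IsMaximal σ r) (ha : σ 1 a ∈ ({a, b} : Finset X))
    (hb : σ 1 b ∉ ({a, b} : Finset X)) : σ 1 a = a := by
  have hr := h.card
  have hr7 := h.seven_le
  rw [Finset.mem_insert, Finset.mem_singleton] at ha
  refine ha.resolve_right fun e => hb ?_
  rw [← e, h.involutive (by omega)]
  exact Finset.mem_insert_self _ _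

theorem exists_swap_eq_zero [Finite X] (h : IsMaximal σ r) :
    ∃ a b, a ≠ b ∧ σ 0 = swap a b ∧ σ 1 a = a ∧ σ 1 b ∉ ({a, b} : Finset X) := by
  have hr := h.card
  have hr7 := h.seven_le
  obtain ⟨a, b, hab, h0⟩ := h.irr.exists_swap_eq_zero hr7 hr
  have hout : σ 1 a ∉ ({a, b} : Finset X) ∨ σ 1 b ∉ ({a, b} : Finset X) := by
    obtain ⟨i, hi, x, hx, hix⟩ := h.exists_apply_notMem (A := {a, b}) ⟨a, by simp⟩
      (by rw [Finset.card_pair hab]; omega)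
    obtain rfl : i = 1 := by
      by_contra hi1
      exact hix (apply_mem_pair_of_commute_swap hab (h.commute_zero h0 hi1 hi) hx)
    rw [Finset.mem_insert, Finset.mem_singleton] at hx
    rcases hx with rfl | rfl
    exacts [Or.inl hix, Or.inr hix]
  rcases h.apply_mem_or_apply_mem hab h0 with ha | hb
  · have hb := hout.resolve_left (not_not.2 ha)
    exact ⟨a, b, hab, h0, h.apply_one_eq ha hb, hb⟩
  · have ha := hout.resolve_right (not_not.2 hb)
    rw [Finset.pair_comm] at ha hb
    exact ⟨b, a, hab.symm, h0.trans (swap_comm a b), h.apply_one_eq hb ha, ha⟩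

theorem exists_isPath_two [Finite X] (h : IsMaximal σ r) : ∃ x, IsPath σ 2 x := by
  have hr := h.card
  have hr7 := h.seven_le
  obtain ⟨a, b, hab, h0, ha, hb⟩ := h.exists_swap_eq_zero
  have hzero : IsPath σ 0 fun _ => a := ⟨fun i hi k hk _ => by
    rw [Set.mem_Iic] at hi hk
    omega, fun i hi => absurd hi i.not_lt_zero⟩
  have hone : IsPath σ 1 (Function.update (fun _ => a) 1 b) := hzero.update (fun _ _ => hab) h0
  have hb' : σ 1 b ≠ a ∧ σ 1 b ≠ b := by simpa using hb
  refine ⟨_, hone.update (y := σ 1 b) (fun i hi => ?_) ?_⟩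
  · obtain rfl | rfl : i = 0 ∨ i = 1 := by omega
    · simpa using hb'.1.symm
    · simpa using hb'.2.symm
  rw [Function.update_self]
  refine h.eq_swap (by omega) (Finset.card_pair hab) (by simp) (Finset.mem_insert_self a _) hab hb
    (fun i hi hir x hx => ?_) (fun x hx hxb => ?_) (h0 ▸ mem_gen (by simp))
  · rw [Finset.mem_insert, Finset.mem_singleton] at hx
    rcases fix_or_swap_of_commute_swap hab (h.commute_zero h0 (by omega) hir) with
      ⟨hia, hib⟩ | ⟨hia, -⟩
    · rcases hx with rfl | rfl
      exacts [hia, hib]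
    · have hcomm := apply_comm_of_commute (h.commute hir hi) a
      rw [ha, hia] at hcomm
      exact absurd hcomm hb'.2
  · rw [Finset.mem_insert, Finset.mem_singleton] at hx
    rw [hx.resolve_right hxb, ha]

end IsMaximal

end SecondGenerator

section Fold

/-- The configuration, shown to be impossible, in which the first two generators form a path whose
first two vertices are exchanged by the third generator. -/
structure IsFold {X : Type*} [DecidableEq X] (σ : ℕ → Perm X) (r : ℕ) (x : ℕ → X) : Prop
    extends IsMaximal σ r where
  path : IsPath σ 2 x
  fold : σ 2 (x 0) = x 1

theorem IsPath.apply_mem {X : Type*} [DecidableEq X] {σ : ℕ → Perm X} {i j : ℕ} {x : ℕ → X}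
    (hx : IsPath σ j x) {A : Finset X} (hA : ∀ i ≤ j, x i ∈ A) (hi : i < j) {z : X} (hz : z ∈ A) :
    σ i z ∈ A := by
  rw [hx.eq_swap i hi]
  exact swap_apply_mem (hA i hi.le) (hA (i + 1) hi) hz

namespace IsFold

variable {X : Type*} [DecidableEq X] {σ : ℕ → Perm X} {r : ℕ} {x : ℕ → X}

theorem seven_le_add_one (h : IsFold σ r x) : 7 ≤ r + 1 := h.card ▸ h.seven_le

theorem fold_one (h : IsFold σ r x) : σ 2 (x 1) = x 0 := by
  have := h.seven_le_add_one
  rw [← h.fold, h.involutive (by omega)]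

theorem apply_eq (h : IsFold σ r x) {i : ℕ} (hi : 3 ≤ i) (hir : i < r) : ∀ l ≤ 2, σ i (x l) = x l :=
  h.path.apply_eq_of_commute le_rfl fun _ _ => (h.commute hir (by omega)).symm

theorem apply_two_notMem (h : IsFold σ r x) : σ 2 (x 2) ∉ ({x 0, x 1, x 2} : Finset X) := by
  have hr := h.seven_le
  intro hmem
  obtain ⟨i, hi, z, hz, hiz⟩ := h.exists_apply_notMem (A := {x 0, x 1, x 2}) ⟨x 0, by simp⟩
    (Finset.card_le_three.trans_lt (by omega))
  refine hiz ?_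
  obtain hi2 | rfl | hi3 : i < 2 ∨ i = 2 ∨ 3 ≤ i := by omega
  · refine h.path.apply_mem (fun l hl => ?_) hi2 hz
    interval_cases l <;> simp
  all_goals
    simp only [Finset.mem_insert, Finset.mem_singleton] at hz
    rcases hz with rfl | rfl | rfl
  · simp [h.fold]
  · simp [h.fold_one]
  · exact hmem
  all_goals simp [h.apply_eq hi3 hi]

theorem card_eq_four (h : IsFold σ r x) : ({x 0, x 1, x 2, σ 2 (x 2)} : Finset X).card = 4 := by
  have hy := h.apply_two_notMem
  simp only [Finset.mem_insert, Finset.mem_singleton, not_or] at hy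
  have h01 := h.path.ne (i := 0) (k := 1) (by omega) (by omega) (by omega)
  have h02 := h.path.ne (i := 0) (k := 2) (by omega) (by omega) (by omega)
  have h12 := h.path.ne (i := 1) (k := 2) (by omega) (by omega) (by omega)
  rw [Finset.card_insert_of_notMem (by simp [h01, h02, Ne.symm hy.1]),
    Finset.card_insert_of_notMem (by simp [h12, Ne.symm hy.2.1]), Finset.card_pair (Ne.symm hy.2.2)]

theorem apply_eq_of_mem (h : IsFold σ r x) {i : ℕ} (hi : 4 ≤ i) (hir : i < r) :
    ∀ z ∈ ({x 0, x 1, x 2, σ 2 (x 2)} : Finset X), σ i z = z := by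
  intro z hz
  have hfix := h.apply_eq (by omega) hir
  simp only [Finset.mem_insert, Finset.mem_singleton] at hz
  rcases hz with rfl | rfl | rfl | rfl
  · exact hfix 0 (by omega)
  · exact hfix 1 (by omega)
  · exact hfix 2 le_rfl
  · rw [← apply_comm_of_commute (h.commute hir (by omega)), hfix 2 le_rfl]

theorem apply_three_eq_of_mem (h : IsFold σ r x) :
    ∀ z ∈ ({x 0, x 1, x 2, σ 2 (x 2)} : Finset X), z ≠ σ 2 (x 2) → σ 3 z = z := by
  intro z hz hzy
  have hr := h.seven_le_add_one
  have hfix := h.apply_eq le_rfl (by omega)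
  simp only [Finset.mem_insert, Finset.mem_singleton] at hz
  rcases hz with rfl | rfl | rfl | rfl
  exacts [hfix 0 (by omega), hfix 1 (by omega), hfix 2 le_rfl, absurd rfl hzy]

theorem swap_mem_gen (h : IsFold σ r x) : swap (x 2) (σ 2 (x 2)) ∈ gen σ (Finset.range 3) := by
  have h01 : swap (x 0) (x 1) ∈ gen σ (Finset.range 3) :=
    h.path.eq_swap 0 (by omega) ▸ mem_gen (by simp)
  have h12 : swap (x 1) (x 2) ∈ gen σ (Finset.range 3) :=
    h.path.eq_swap 1 (by omega) ▸ mem_gen (by simp)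
  have h0y := swap_apply_apply_mem (g := σ 2) (mem_gen (by simp)) h12
  rw [h.fold_one] at h0y
  rw [swap_comm] at h01 h12
  exact SubmonoidClass.swap_mem_trans _ (SubmonoidClass.swap_mem_trans _ h12 h01) h0y

theorem commute_zero_swap (h : IsFold σ r x) : Commute (σ 0) (swap (x 2) (σ 2 (x 2))) := by
  have hy := h.apply_two_notMem
  rw [h.path.eq_swap 0 (by omega)]
  refine commute_swap_swap ?_ fun hmem => hy ?_
  · simp [h.path.ne (i := 2) (k := 0), h.path.ne (i := 2) (k := 1)]
  · simp only [Finset.mem_insert, Finset.mem_singleton] at hmem ⊢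
    tauto

variable [Finite X]

theorem eq_mul_swap (h : IsFold σ r x) : σ 2 = σ 0 * swap (x 2) (σ 2 (x 2)) := by
  have hr := h.seven_le_add_one
  have hy := h.apply_two_notMem
  have hcomm := h.commute_zero_swap
  have h0 := h.path.eq_swap 0 (by omega)
  refine h.eq_of_forall_apply_eq (mem_gen (by simp))
    (mul_mem (mem_gen (by simp)) h.swap_mem_gen) (h.irr.mul_self 2 (Finset.mem_range.2 (by omega)))
    ?_ ?_ (F := {x 0, x 1, x 2, σ 2 (x 2)}) h.card_eq_four.ge ?_
    fun i hi hir => h.apply_eq_of_mem hi hir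
  · rw [hcomm.symm.mul_mul_mul_comm, h.irr.mul_self 0 (Finset.mem_range.2 (by omega)),
      swap_mul_self, one_mul]
  · exact (h.commute (by omega) le_rfl).symm.mul_right
      (commute_swap_apply (h.involutive (by omega)) _)
  · intro z hz
    simp only [Finset.mem_insert, Finset.mem_singleton, not_or] at hz hy
    have h02 := h.path.ne (i := 0) (k := 2) (by omega) (by omega) (by omega)
    have h12 := h.path.ne (i := 1) (k := 2) (by omega) (by omega) (by omega)
    rcases hz with rfl | rfl | rfl | rfl
    · rw [Perm.mul_apply, swap_apply_of_ne_of_ne h02 (Ne.symm hy.1), h0, swap_apply_left, h.fold]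
    · rw [Perm.mul_apply, swap_apply_of_ne_of_ne h12 (Ne.symm hy.2.1), h0, swap_apply_right,
        h.fold_one]
    · rw [hcomm.eq, Perm.mul_apply, h0, swap_apply_of_ne_of_ne h02.symm h12.symm, swap_apply_left]
    · rw [hcomm.eq, Perm.mul_apply, h0, swap_apply_of_ne_of_ne hy.1 hy.2.1, swap_apply_right,
        h.involutive (by omega)]

theorem apply_two_eq (h : IsFold σ r x) {z : X}
    (hz : z ∉ ({x 0, x 1, x 2, σ 2 (x 2)} : Finset X)) : σ 2 z = z := by
  simp only [Finset.mem_insert, Finset.mem_singleton, not_or] at hz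
  obtain ⟨hz0, hz1, hz2, hzy⟩ := hz
  rw [h.eq_mul_swap, Perm.mul_apply, swap_apply_of_ne_of_ne hz2 hzy, h.path.eq_swap 0 (by omega),
    swap_apply_of_ne_of_ne hz0 hz1]

theorem apply_three_notMem (h : IsFold σ r x) :
    σ 3 (σ 2 (x 2)) ∉ ({x 0, x 1, x 2, σ 2 (x 2)} : Finset X) := by
  have hr := h.seven_le
  refine h.apply_notMem (by rw [h.card_eq_four]; omega) (by simp) (fun i hi hi3 z hz => ?_)
    h.apply_three_eq_of_mem
  obtain hi2 | rfl | hi4 : i < 2 ∨ i = 2 ∨ 4 ≤ i := by omega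
  · refine h.path.apply_mem (fun l hl => ?_) hi2 hz
    interval_cases l <;> simp
  · by_contra hz2
    have := h.apply_two_eq hz2
    rw [h.involutive hi] at this
    exact hz2 (this ▸ hz)
  · rwa [h.apply_eq_of_mem hi4 hi z hz]

theorem three_eq_swap (h : IsFold σ r x) : σ 3 = swap (σ 2 (x 2)) (σ 3 (σ 2 (x 2))) := by
  have hr := h.seven_le_add_one
  have hy := h.apply_two_notMem
  simp only [Finset.mem_insert, Finset.mem_singleton, not_or] at hy
  exact h.eq_swap (by omega) h.card_eq_four (b := x 2) (by simp) (by simp) (Ne.symm hy.2.2)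
    h.apply_three_notMem (fun i hi hir => h.apply_eq_of_mem (by omega) hir)
    h.apply_three_eq_of_mem h.swap_mem_gen

/-- Conjugation by `σ 2` and `σ 3` puts the factor `swap (x 2) (σ 2 (x 2))` of `σ 2`, and hence
`σ 0`, into the group generated by `σ 2` and `σ 3`. -/
theorem not_isFold : ¬ IsFold σ r x := fun h => by
  have hr := h.seven_le_add_one
  have h2 : σ 2 ∈ gen σ {2, 3} := mem_gen (by simp)
  have hyz : swap (σ 2 (x 2)) (σ 3 (σ 2 (x 2))) ∈ gen σ {2, 3} :=
    h.three_eq_swap ▸ mem_gen (by simp)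
  have hxz := swap_apply_apply_mem h2 hyz
  rw [h.involutive (by omega), h.apply_two_eq h.apply_three_notMem] at hxz
  rw [swap_comm] at hyz
  have hxy := SubmonoidClass.swap_mem_trans _ hxz hyz
  refine h.irr.notMem_gen (A := {2, 3}) (i := 0) (fun i hi => ?_) (Finset.mem_range.2 (by omega))
    (by simp) ?_
  · simp only [Finset.mem_insert, Finset.mem_singleton, Finset.mem_range] at hi ⊢
    omega
  · rw [← mul_inv_eq_of_eq_mul h.eq_mul_swap]
    exact mul_mem h2 (inv_mem hxy)

end IsFold

end Fold

namespace IsMaximal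

section

variable {X : Type*} [DecidableEq X] [Finite X] {σ : ℕ → Perm X} {r j : ℕ} {x : ℕ → X}

theorem apply_path (h : IsMaximal σ r) (hj : 2 ≤ j) (hjr : j < r) (hx : IsPath σ j x) :
    ∀ i < j, σ j (x i) = x i := by
  intro i hi
  obtain rfl | hj3 := hj.eq_or_lt
  · have h01 := fix_or_swap_of_commute_swap
      (hx.ne (i := 0) (k := 1) (by omega) (by omega) (by omega))
      (h.commute_zero (hx.eq_swap 0 (by omega)) (show 2 ≠ 1 by omega) hjr)
    obtain ⟨h0, h1⟩ := h01.resolve_right fun hfold => IsFold.not_isFold ⟨h, hx, hfold.1⟩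
    obtain rfl | rfl : i = 0 ∨ i = 1 := by omega
    exacts [h0, h1]
  · exact (hx.mono (Nat.sub_le j 1)).apply_eq_of_commute (by omega)
      (fun l hl => (h.commute hjr (by omega)).symm) i (by omega)

theorem exists_isPath_succ (h : IsMaximal σ r) (hj : 2 ≤ j) (hjr : j < r) (hx : IsPath σ j x) :
    ∃ x', IsPath σ (j + 1) x' := by
  have hr := h.card
  set A := (Finset.range (j + 1)).image x with hA
  have hmem : ∀ i ≤ j, x i ∈ A := fun i hi =>
    Finset.mem_image_of_mem x (Finset.mem_range.2 (by omega))
  have hcard : A.card = j + 1 := by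
    rw [hA, Finset.card_image_of_injOn (hx.injOn.mono fun i hi => ?_), Finset.card_range]
    exact Nat.lt_succ_iff.1 (Finset.mem_range.1 hi)
  have hfix : ∀ i, j + 1 ≤ i → i < r → ∀ z ∈ A, σ i z = z := fun i hi hir z hz => by
    obtain ⟨l, hl, rfl⟩ := Finset.mem_image.1 hz
    exact hx.apply_eq_of_commute hj (fun k hk => (h.commute hir (by omega)).symm) l
      (Nat.lt_succ_iff.1 (Finset.mem_range.1 hl))
  have hfixj : ∀ z ∈ A, z ≠ x j → σ j z = z := fun z hz hzj => by
    obtain ⟨l, hl, rfl⟩ := Finset.mem_image.1 hz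
    exact h.apply_path hj hjr hx l <|
      (Nat.lt_succ_iff.1 (Finset.mem_range.1 hl)).lt_of_ne fun e => hzj (congrArg x e)
  have hnot : σ j (x j) ∉ A := h.apply_notMem (by omega) (hmem j le_rfl) (fun i hi hij z hz => by
    obtain hlt | hlt := hij.lt_or_gt
    · exact hx.apply_mem hmem hlt hz
    · rwa [hfix i hlt hi z hz]) hfixj
  have hlast := hx.eq_swap (j - 1) (by omega)
  rw [Nat.sub_add_cancel (by omega)] at hlast
  exact ⟨_, hx.update (fun i hi => ne_of_mem_of_not_mem (hmem i hi) hnot) <|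
    h.eq_swap hjr hcard (hmem j le_rfl) (hmem (j - 1) (by omega))
      (hx.ne (by omega) le_rfl (by omega)) hnot (fun i hi => hfix i (by omega)) hfixj
      (hlast ▸ mem_gen (Finset.mem_range.2 (by omega)))⟩

theorem exists_isPath (h : IsMaximal σ r) : ∃ x, IsPath σ r x := by
  have hr := h.card
  have hr7 := h.seven_le
  have hind : ∀ j, 2 ≤ j → j ≤ r → ∃ x, IsPath σ j x := fun j hj => by
    induction j, hj using Nat.le_induction with
    | base => exact fun _ => h.exists_isPath_two
    | succ j hj ih =>
      intro hjr
      obtain ⟨x, hx⟩ := ih (by omega)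
      exact h.exists_isPath_succ hj hjr hx
  exact hind r (by omega) le_rfl

end

variable {X : Type*} [Finite X] {σ : ℕ → Perm X} {r : ℕ}

theorem gen_eq_top (h : IsMaximal σ r) : gen σ (Finset.range r) = ⊤ := by
  classical
  obtain ⟨x, hx⟩ := h.exists_isPath
  have : MulAction.IsPretransitive (Subgroup.closure (σ '' (Finset.range r : Set ℕ))) X :=
    h.isPretransitive
  refine closure_of_isSwap_of_isPretransitive ?_
  rintro _ ⟨i, hi, rfl⟩
  have hi : i < r := Finset.mem_range.1 hi
  exact ⟨x i, x (i + 1), hx.ne hi.le hi i.succ_ne_self.symm, hx.eq_swap i hi⟩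

theorem orderOf_mul_succ (h : IsMaximal σ r) {i : ℕ} (hi : i + 1 < r) :
    orderOf (σ i * σ (i + 1)) = 3 := by
  classical
  have := Fintype.ofFinite X
  obtain ⟨x, hx⟩ := h.exists_isPath
  rw [hx.eq_swap i (by omega), hx.eq_swap (i + 1) hi, swap_comm (x i)]
  exact (Perm.isThreeCycle_swap_mul_swap_same (hx.ne (by omega) (by omega) (by omega))
    (hx.ne (by omega) (by omega) (by omega)) (hx.ne (by omega) (by omega) (by omega))).orderOf

end IsMaximal

/-! ### Two blocks -/

theorem nonempty_prod_mulEquiv_sup {Γ : Type*} [Group Γ] {H K : Subgroup Γ}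
    (hc : ∀ a ∈ H, ∀ b ∈ K, Commute a b) (hdisj : Disjoint H K) :
    Nonempty (H × K ≃* (H ⊔ K : Subgroup Γ)) := by
  have hcomm : ∀ (a : H) (b : K), Commute (H.subtype a) (K.subtype b) := fun a b => hc a a.2 b b.2
  let f := MonoidHom.noncommCoprod H.subtype K.subtype hcomm
  have hf : Function.Injective f := (MonoidHom.noncommCoprod_injective _ _ hcomm).2
    ⟨H.subtype_injective, K.subtype_injective, by simpa only [Subgroup.range_subtype]⟩
  have hrange : f.range = H ⊔ K := by
    rw [MonoidHom.noncommCoprod_range, Subgroup.range_subtype, Subgroup.range_subtype]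
  exact ⟨(MonoidHom.ofInjective hf).trans (MulEquiv.subgroupCongr hrange)⟩

theorem commute_of_mul_sq_eq_one {Γ : Type*} [Group Γ] {a b : Γ} (ha : a * a = 1) (hb : b * b = 1)
    (h : (a * b) ^ 2 = 1) : Commute a b := by
  have hinv := eq_inv_of_mul_eq_one_left (pow_two (a * b) ▸ h)
  rwa [mul_inv_rev, ← eq_inv_of_mul_eq_one_left ha, ← eq_inv_of_mul_eq_one_left hb] at hinv

namespace IsDescent

variable {X Q : Type*} {ζ : Perm X} {p : X → Q} {σ : ℕ → Perm X} {σ' : ℕ → Perm Q}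
  {S T : Finset ℕ}

theorem exists_semiconj_of_mem_sup (h : IsDescent ζ p σ σ' S T) {g : Perm X}
    (hg : g ∈ Subgroup.zpowers ζ ⊔ gen σ S) : ∃ g' ∈ gen σ' S, Function.Semiconj p g g' := by
  have hle : Subgroup.zpowers ζ ⊔ gen σ S ≤
      (semiconjSubgroup p ⊓ (gen σ' S).comap (MonoidHom.snd _ _)).map (MonoidHom.fst _ _) := by
    refine sup_le (Subgroup.zpowers_le.2 ⟨(ζ, 1), ⟨h.quot.map_invol, one_mem (gen σ' S)⟩, rfl⟩) ?_
    exact gen_le fun i hi => ⟨(σ i, σ' i), ⟨h.semiconj i hi, mem_gen hi⟩, rfl⟩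
  obtain ⟨⟨_, g'⟩, ⟨hsemi, hmem⟩, rfl⟩ := hle hg
  exact ⟨g', hmem, hsemi⟩

theorem isPretransitive_of_sup (h : IsDescent ζ p σ σ' S T)
    [MulAction.IsPretransitive ↥(Subgroup.zpowers ζ ⊔ gen σ S) X] :
    MulAction.IsPretransitive (gen σ' S) Q := by
  refine ⟨fun q q' => ?_⟩
  obtain ⟨x, rfl⟩ := h.quot.surj q
  obtain ⟨y, rfl⟩ := h.quot.surj q'
  obtain ⟨g, rfl⟩ :=
    MulAction.exists_smul_eq ↥(Subgroup.zpowers ζ ⊔ gen σ S) x y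
  obtain ⟨g', hg', hgg'⟩ := h.exists_semiconj_of_mem_sup g.2
  exact ⟨⟨g', hg'⟩, (hgg' x).symm⟩

theorem eq_of_kern_eq_bot [Finite X] (h : IsDescent ζ p σ σ' S T) (hker : kern p σ S = ⊥) :
    T = S := by
  have hpow := h.two_pow_le_card_kern h.subset subset_rfl
  rw [hker, Subgroup.card_bot, ← pow_zero 2, Nat.pow_le_pow_iff_right (by norm_num)] at hpow
  exact Finset.eq_of_subset_of_card_le h.subset (Nat.sub_eq_zero_iff_le.1 (Nat.le_zero.1 hpow))

theorem eq_of_semiconj_of_kern_eq_bot (hker : kern p σ S = ⊥) {g k : Perm X} {g' : Perm Q}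
    (hg : g ∈ gen σ S) (hk : k ∈ gen σ S) (hgg' : Function.Semiconj p g g')
    (hkg' : Function.Semiconj p k g') : g = k := by
  have hmem : k⁻¹ * g ∈ kern p σ S := by
    refine Subgroup.mem_inf.2 ⟨mul_mem (inv_mem hk) hg, fun x => g'.injective ?_⟩
    rw [← hkg'.eq, ← hgg'.eq, ← Perm.mul_apply, mul_inv_cancel_left]
  rw [hker, Subgroup.mem_bot] at hmem
  exact (inv_mul_eq_one.1 hmem).symm

theorem exists_mulEquiv (h : IsDescent ζ p σ σ' S T) (hker : kern p σ S = ⊥) :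
    ∃ e : gen σ S ≃* gen σ' S, ∀ g, Function.Semiconj p g.1 (e g).1 := by
  choose f hf using fun g : gen σ S => exists_semiconj_of_mem_gen h.semiconj g.2
  let φ : gen σ S →* gen σ' S := MonoidHom.mk' (fun g => ⟨f g, (hf g).1⟩) fun g k =>
    Subtype.ext <| h.quot.eq_of_semiconj (hf (g * k)).2 ((hf g).2.comp_right (hf k).2)
  refine ⟨MulEquiv.ofBijective φ ⟨fun g k hgk => ?_, fun g' => ?_⟩, fun g => (hf g).2⟩
  · have hfgk : f g = f k := congrArg Subtype.val hgk
    exact Subtype.ext <| eq_of_semiconj_of_kern_eq_bot hker g.2 k.2 (hf g).2 (hfgk ▸ (hf k).2)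
  · obtain ⟨g, hg, hgg'⟩ := exists_mem_gen_semiconj h.semiconj g'.2
    exact ⟨⟨g, hg⟩, Subtype.ext <| h.quot.eq_of_semiconj (hf _).2 hgg'⟩

theorem orderOf_mul_eq (h : IsDescent ζ p σ σ' S T) (hker : kern p σ S = ⊥) {i j : ℕ}
    (hi : i ∈ S) (hj : j ∈ S) : orderOf (σ i * σ j) = orderOf (σ' i * σ' j) := by
  obtain ⟨e, he⟩ := h.exists_mulEquiv hker
  have hmem : σ i * σ j ∈ gen σ S := mul_mem (mem_gen hi) (mem_gen hj)
  have heq : (e ⟨_, hmem⟩ : Perm Q) = σ' i * σ' j := h.quot.eq_of_semiconj (he _)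
    (b := σ' i * σ' j) ((h.semiconj i hi).comp_right (h.semiconj j hj))
  rw [← Subgroup.orderOf_mk _ hmem, ← e.orderOf_eq, ← Subgroup.orderOf_coe, heq]

theorem isMaximal [Finite X] {r : ℕ} (h : IsDescent ζ p σ σ' (Finset.range r) T)
    (hker : kern p σ (Finset.range r) = ⊥) (hcard : r + 1 = Nat.card Q) (hr : 7 ≤ Nat.card Q)
    [MulAction.IsPretransitive ↥(Subgroup.zpowers ζ ⊔ gen σ (Finset.range r)) X]
    (hinf : ∀ j < r, gen σ (Finset.range (j + 1)) ⊓ gen σ (Finset.Ico (j + 2) r) = ⊥) :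
    IsMaximal σ' r where
  irr := h.eq_of_kern_eq_bot hker ▸ h.irr'
  card := hcard
  seven_le := hr
  isPretransitive := h.isPretransitive_of_sup
  inf_eq_bot j := by
    rcases Nat.lt_or_ge j r with hj | hj
    · have hA : Finset.range (j + 1) ⊆ Finset.range r := Finset.range_subset_range.2 hj
      have hB : Finset.Ico (j + 2) r ⊆ Finset.range r := fun i hi =>
        Finset.mem_range.2 (Finset.mem_Ico.1 hi).2
      refine eq_bot_iff.2 fun g' hg' => ?_
      obtain ⟨g, hg, hgg'⟩ := exists_mem_gen_semiconj (h.semiconj_of_subset hA) hg'.1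
      obtain ⟨k, hk, hkg'⟩ := exists_mem_gen_semiconj (h.semiconj_of_subset hB) hg'.2
      obtain rfl := eq_of_semiconj_of_kern_eq_bot hker (gen_mono hA hg) (gen_mono hB hk) hgg' hkg'
      obtain rfl : g = 1 := Subgroup.mem_bot.1 <| hinf j hj ▸ Subgroup.mem_inf.2 ⟨hg, hk⟩
      exact Subgroup.mem_bot.2 <| h.quot.eq_of_semiconj hgg' fun _ => rfl
    · rw [Finset.Ico_eq_empty (by omega)]
      simp [gen]

end IsDescent

theorem eq_one_or_eq_of_swap_blocks {X : Type*} {b : X → Fin 2} {g τ : Perm X}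
    (hcompat : ∀ x y, b x = b y → b (g x) = b (g y)) (hswap : ∀ x, b (τ x) ≠ b x)
    (hfib : ∀ x, g x = x ∨ g x = τ x) : g = 1 ∨ g = τ := by
  by_cases hx : ∃ x, g x = x
  · obtain ⟨x, hx⟩ := hx
    have hblock : ∀ y, b y = b x → g y = y := fun y hy => (hfib y).resolve_right fun e =>
      hswap y (by rw [← e, hcompat y x hy, hx, hy])
    refine Or.inl (Perm.ext fun y => ?_)
    by_cases hy : b y = b x
    · exact hblock y hy
    · have hτy : g (τ y) = τ y := hblock _ (by have := hswap y; omega)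
      exact (hfib y).resolve_right fun e => hswap y (by rw [g.injective (hτy.trans e.symm)])
  · push Not at hx
    exact Or.inr (Perm.ext fun x => (hfib x).resolve_left (hx x))

/-- The increasing enumeration of the elements of `Fin r` other than `i₀`, by the indices below
`r - 1`. It is defined on all of `ℕ`, with value `i₀` at the indices from `r - 1` on. -/
def skip {r : ℕ} (i₀ : Fin r) (j : ℕ) : Fin r :=
  if h : j < i₀ then ⟨j, h.trans i₀.2⟩ else if h : j + 1 < r then ⟨j + 1, h⟩ else i₀

section Skip

variable {r : ℕ} {i₀ : Fin r} {j : ℕ}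

theorem val_skip (hj : j < r - 1) : (skip i₀ j : ℕ) = if j < i₀ then j else j + 1 := by
  rw [skip, dif_pos (show j + 1 < r by omega)]
  split_ifs <;> rfl

theorem skip_ne (hj : j < r - 1) : skip i₀ j ≠ i₀ := fun e => by
  have := congrArg Fin.val e
  rw [val_skip hj] at this
  split_ifs at this <;> omega

theorem skip_injOn : Set.InjOn (skip i₀) (Finset.range (r - 1) : Set ℕ) := by
  intro j hj k hk e
  have := congrArg Fin.val e
  rw [val_skip (Finset.mem_range.1 hj), val_skip (Finset.mem_range.1 hk)] at this
  split_ifs at this <;> omega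

theorem exists_skip_eq {i : Fin r} (hi : i ≠ i₀) : ∃ j < r - 1, skip i₀ j = i := by
  have hne : (i : ℕ) ≠ i₀ := Fin.val_ne_of_ne hi
  rcases Nat.lt_or_ge i i₀ with h | h
  · exact ⟨i, by omega, Fin.ext (by rw [val_skip (by omega), if_pos h])⟩
  · refine ⟨i - 1, by omega, Fin.ext ?_⟩
    rw [val_skip (by omega), if_neg (by omega)]
    omega

theorem closure_range_eq_sup {Γ : Type*} [Group Γ] (ρ : Fin r → Γ) (i₀ : Fin r) :
    Subgroup.closure (Set.range ρ) =
      Subgroup.zpowers (ρ i₀) ⊔ gen (ρ ∘ skip i₀) (Finset.range (r - 1)) := by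
  refine le_antisymm ((Subgroup.closure_le _).2 ?_)
    (sup_le (Subgroup.zpowers_le.2 ?_) (gen_le fun j _ => ?_))
  · rintro _ ⟨i, rfl⟩
    obtain rfl | hi := eq_or_ne i i₀
    · exact Subgroup.mem_sup_left (Subgroup.mem_zpowers _)
    · obtain ⟨j, hj, rfl⟩ := exists_skip_eq hi
      exact Subgroup.mem_sup_right (mem_gen (σ := ρ ∘ skip i₀) (Finset.mem_range.2 hj))
  all_goals exact Subgroup.subset_closure ⟨_, rfl⟩

end Skip

end Sggi

namespace IsStringC

open Equiv Sggi

variable {n r : ℕ} {ρ : Fin r → Perm (Fin n)} {i₀ : Fin r}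

theorem mul_self (h : IsStringC ρ) (i : Fin r) : ρ i * ρ i = 1 := by
  rw [← pow_two, ← h.1.1 i, pow_orderOf_eq_one]

theorem ne_one (h : IsStringC ρ) (i : Fin r) : ρ i ≠ 1 := fun e => by
  simpa [e] using h.1.1 i

theorem commute (h : IsStringC ρ) {i j : Fin r} (hij : (i : ℕ) + 2 ≤ j) :
    Commute (ρ i) (ρ j) :=
  commute_of_mul_sq_eq_one (h.mul_self i) (h.mul_self j) <|
    h.1.2 i j (lt_abs.2 (Or.inr (by omega)))

theorem notMem_gen_skip (h : IsStringC ρ) : ρ i₀ ∉ gen (ρ ∘ skip i₀) (Finset.range (r - 1)) := by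
  intro hmem
  have hinf : ρ i₀ ∈ Subgroup.closure (ρ '' {i₀}) ⊓
      Subgroup.closure (ρ '' (skip i₀ '' (Finset.range (r - 1) : Set ℕ))) :=
    Subgroup.mem_inf.2 ⟨Subgroup.subset_closure ⟨i₀, rfl, rfl⟩, Set.image_comp ρ _ _ ▸ hmem⟩
  have hdisj : i₀ ∉ skip i₀ '' (Finset.range (r - 1) : Set ℕ) := by
    rintro ⟨j, hj, hji⟩
    exact skip_ne (Finset.mem_range.1 hj) hji
  rw [h.2, Set.singleton_inter_eq_empty.2 hdisj, Set.image_empty, Subgroup.closure_empty,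
    Subgroup.mem_bot] at hinf
  exact h.ne_one i₀ hinf

theorem gen_skip_inf_eq_bot (h : IsStringC ρ) {A B : Finset ℕ} (hA : A ⊆ Finset.range (r - 1))
    (hB : B ⊆ Finset.range (r - 1)) (hAB : Disjoint A B) :
    gen (ρ ∘ skip i₀) A ⊓ gen (ρ ∘ skip i₀) B = ⊥ := by
  rw [gen, gen, Set.image_comp, Set.image_comp, h.2,
    ← skip_injOn.image_inter (Finset.coe_subset.2 hA) (Finset.coe_subset.2 hB),
    (Finset.disjoint_coe.2 hAB).inter_eq]
  simp

theorem irredundant_skip (h : IsStringC ρ) :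
    Irredundant (ρ ∘ skip i₀) (Finset.range (r - 1)) where
  mul_self i _ := h.mul_self _
  comm i hi j hj hij := by
    refine h.commute ?_
    rw [val_skip (Finset.mem_range.1 hi), val_skip (Finset.mem_range.1 hj)]
    split_ifs <;> omega
  irred i hi hmem := by
    have hinf := Subgroup.mem_inf.2 ⟨hmem, mem_gen (Finset.mem_singleton_self i)⟩
    rw [h.gen_skip_inf_eq_bot (Finset.erase_subset _ _) (Finset.singleton_subset_iff.2 hi)
      (by simp), Subgroup.mem_bot] at hinf
    exact h.ne_one _ hinf

end IsStringC

namespace Sggi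

open Equiv

/-- The two-blocks setup of a string C-group whose rank is half its degree, in the case where every
generator commutes with the generator `ρ i₀` interchanging the blocks, i.e. `R = ∅`. -/
structure CentralTwoBlocks {n r : ℕ} (ρ : Fin r → Perm (Fin n)) (b : Fin n → Fin 2)
    (i₀ : Fin r) : Prop where
  isStringC : IsStringC ρ
  isPretransitive : MulAction.IsPretransitive (Subgroup.closure (Set.range ρ)) (Fin n)
  compat : ∀ g ∈ Subgroup.closure (Set.range ρ), ∀ x y, b x = b y → b (g x) = b (g y)
  swap : ∀ x, b (ρ i₀ x) ≠ b x
  commute : ∀ i, Commute (ρ i) (ρ i₀)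
  two_mul_rank : 2 * r = n
  seven_le : 7 ≤ r

namespace CentralTwoBlocks

variable {n r : ℕ} {ρ : Fin r → Perm (Fin n)} {b : Fin n → Fin 2} {i₀ i j : Fin r}

theorem commute_of_mem_zpowers (h : CentralTwoBlocks ρ b i₀) {z g : Perm (Fin n)}
    (hz : z ∈ Subgroup.zpowers (ρ i₀)) (hg : g ∈ gen (ρ ∘ skip i₀) (Finset.range (r - 1))) :
    Commute z g := by
  obtain ⟨k, rfl⟩ := hz
  exact ((commute_of_mem_gen (fun _ _ => h.commute _) hg).zpow_right k).symm

theorem disjoint_zpowers_gen (h : CentralTwoBlocks ρ b i₀) :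
    Disjoint (Subgroup.zpowers (ρ i₀)) (gen (ρ ∘ skip i₀) (Finset.range (r - 1))) := by
  rw [Subgroup.disjoint_def]
  rintro _ ⟨k, rfl⟩ hk
  have hsq := h.isStringC.mul_self i₀
  rcases Int.even_or_odd' k with ⟨m, rfl | rfl⟩ <;>
    simp only [zpow_add_one, zpow_mul, zpow_two, hsq, one_zpow, one_mul] at hk ⊢
  exact absurd hk h.isStringC.notMem_gen_skip

theorem exists_isDescent (h : CentralTwoBlocks ρ b i₀) :
    ∃ (Q : Type) (_ : Finite Q) (p : Fin n → Q) (σ' : ℕ → Perm Q) (T : Finset ℕ),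
      IsDescent (ρ i₀) p (ρ ∘ skip i₀) σ' (Finset.range (r - 1)) T ∧
      kern p (ρ ∘ skip i₀) (Finset.range (r - 1)) = ⊥ ∧ Nat.card Q = r ∧
      IsMaximal σ' (r - 1) := by
  have hr := h.seven_le
  have hn := h.two_mul_rank
  have hsup := closure_range_eq_sup ρ i₀
  have : MulAction.IsPretransitive
      ↥(Subgroup.zpowers (ρ i₀) ⊔ gen (ρ ∘ skip i₀) (Finset.range (r - 1))) (Fin n) :=
    hsup ▸ h.isPretransitive
  obtain ⟨Q, hQ, p, σ', T, hD⟩ := Sggi.exists_isDescent (ζ := ρ i₀)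
    (fun x => by rw [← Perm.mul_apply, h.isStringC.mul_self, Perm.one_apply])
    h.isStringC.irredundant_skip fun i _ => h.commute (skip i₀ i)
  have hker : kern p (ρ ∘ skip i₀) (Finset.range (r - 1)) = ⊥ := by
    refine eq_bot_iff.2 fun v hv => ?_
    have hvG : v ∈ Subgroup.closure (Set.range ρ) := hsup ▸ Subgroup.mem_sup_right hv.1
    rcases eq_one_or_eq_of_swap_blocks (h.compat v hvG) h.swap (hD.quot.mem_fiberGroup_iff.1 hv.2)
      with rfl | rfl
    · exact one_mem _
    · exact absurd hv.1 h.isStringC.notMem_gen_skip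
  have hcard : Nat.card Q = r := by
    have := hD.isPretransitive_of_sup
    have h2Q := hD.two_mul_card_eq (h.isStringC.ne_one i₀)
    rw [Nat.card_fin] at h2Q
    omega
  refine ⟨Q, hQ, p, σ', T, hD, hker, hcard, hD.isMaximal hker (by omega) (by omega) ?_⟩
  refine fun j hj => h.isStringC.gen_skip_inf_eq_bot (Finset.range_subset_range.2 hj)
    (fun i hi => Finset.mem_range.2 (Finset.mem_Ico.1 hi).2) (Finset.disjoint_left.2 fun i hi => ?_)
  rw [Finset.mem_range] at hi
  rw [Finset.mem_Ico]
  omega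

theorem nonempty_mulEquiv (h : CentralTwoBlocks ρ b i₀) :
    Nonempty (Subgroup.closure (Set.range ρ) ≃* Perm (Fin 2) × Perm (Fin r)) := by
  obtain ⟨Q, _, p, σ', T, hD, hker, hcard, hmax⟩ := h.exists_isDescent
  obtain ⟨e⟩ := nonempty_prod_mulEquiv_sup (fun _ ha _ hb => h.commute_of_mem_zpowers ha hb)
    h.disjoint_zpowers_gen
  obtain ⟨e', -⟩ := hD.exists_mulEquiv hker
  have hzpowers : Nat.card (Subgroup.zpowers (ρ i₀)) = 2 := by
    rw [Nat.card_zpowers, h.isStringC.1.1 i₀]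
  have hperm : Nat.card (Perm (Fin 2)) = 2 := by
    rw [Nat.card_perm, Nat.card_fin, Nat.factorial_two]
  exact ⟨(MulEquiv.subgroupCongr (closure_range_eq_sup ρ i₀)).trans <| e.symm.trans <|
    (mulEquivOfPrimeCardEq (p := 2) hzpowers hperm).prodCongr <|
      (e'.trans (MulEquiv.subgroupCongr hmax.gen_eq_top)).trans <|
        Subgroup.topEquiv.trans (Finite.equivFinOfCardEq hcard).permCongrHom⟩

theorem orderOf_mul_eq_two (h : CentralTwoBlocks ρ b i₀) (hi : i ≠ i₀) :
    orderOf (ρ i * ρ i₀) = 2 := by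
  refine orderOf_eq_prime ?_ fun e => h.isStringC.notMem_gen_skip (i₀ := i₀) ?_
  · rw [(h.commute i).mul_pow, pow_two, pow_two, h.isStringC.mul_self, h.isStringC.mul_self,
      mul_one]
  · obtain ⟨k, hk, rfl⟩ := exists_skip_eq hi
    rw [eq_inv_of_mul_eq_one_right e]
    exact inv_mem (mem_gen (σ := ρ ∘ skip i₀) (Finset.mem_range.2 hk))

theorem orderOf_mul_skip_succ (h : CentralTwoBlocks ρ b i₀) {k : ℕ} (hk : k + 1 < r - 1) :
    orderOf (ρ (skip i₀ k) * ρ (skip i₀ (k + 1))) = 3 := by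
  obtain ⟨Q, _, p, σ', T, hD, hker, -, hmax⟩ := h.exists_isDescent
  rw [← hmax.orderOf_mul_succ hk]
  exact hD.orderOf_mul_eq hker (Finset.mem_range.2 (by omega)) (Finset.mem_range.2 hk)

theorem orderOf_mul_eq_three (h : CentralTwoBlocks ρ b i₀) (hij : (j : ℕ) = i + 1) (hi : i ≠ i₀)
    (hj : j ≠ i₀) : orderOf (ρ i * ρ j) = 3 := by
  obtain ⟨k, hk, rfl⟩ := exists_skip_eq hi
  obtain ⟨l, hl, rfl⟩ := exists_skip_eq hj
  have hlk : l = k + 1 := by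
    rw [val_skip hk, val_skip hl] at hij
    split_ifs at hij <;> omega
  exact hlk ▸ h.orderOf_mul_skip_succ (hlk ▸ hl)

/-- Otherwise the neighbours of `ρ i₀`, which commute, would be consecutive in the remaining family,
so that their product would have order three. -/
theorem eq_zero_or_eq_pred (h : CentralTwoBlocks ρ b i₀) : (i₀ : ℕ) = 0 ∨ (i₀ : ℕ) = r - 1 := by
  by_contra! hint
  have hsq : (ρ (skip i₀ (i₀ - 1)) * ρ (skip i₀ (i₀ - 1 + 1))) ^ 2 = 1 := by
    rw [(h.isStringC.commute _).mul_pow, pow_two, pow_two, h.isStringC.mul_self,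
      h.isStringC.mul_self, mul_one]
    rw [val_skip (by omega), val_skip (by omega), if_pos (by omega), if_neg (by omega)]
  have hdvd := orderOf_dvd_of_pow_eq_one hsq
  rw [h.orderOf_mul_skip_succ (by omega)] at hdvd
  norm_num at hdvd

end CentralTwoBlocks

end Sggi

theorem stmt16 {n r : ℕ} (hm7 : 7 ≤ n / 2) (hn2 : Even n) (hr : r = n / 2)
    (ρ : Fin r → Equiv.Perm (Fin n)) (hstring : IsStringC ρ)
    (htrans : MulAction.IsPretransitive ↥(Subgroup.closure (Set.range ρ)) (Fin n))
    -- the two blocks B₁ = b⁻¹ 0 and B₂ = b⁻¹ 1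
    (b : Fin n → Fin 2) (hbsurj : Function.Surjective b)
    (hfib : ∀ c : Fin 2, Set.ncard {x | b x = c} = n / 2)
    (hcompat : ∀ g ∈ Subgroup.closure (Set.range ρ), ∀ x y : Fin n,
      b x = b y → b (g x) = b (g y))
    -- ρ i₀ interchanges the two blocks
    (i₀ : Fin r) (hswap : ∀ x : Fin n, b (ρ i₀ x) ≠ b x)
    -- R = ∅
    (hR : {i : Fin r | i ≠ i₀ ∧ ¬ Commute (ρ i) (ρ i₀)} = ∅) :
    Nonempty (↥(Subgroup.closure (Set.range ρ)) ≃*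
      (Equiv.Perm (Fin 2) × Equiv.Perm (Fin (n / 2)))) ∧
    ((orderOf (ρ ⟨0, by omega⟩ * ρ ⟨1, by omega⟩) = 2 ∧
        ∀ (i : ℕ) (hi1 : 1 ≤ i) (hi2 : i ≤ r - 2),
          orderOf (ρ ⟨i, by omega⟩ * ρ ⟨i + 1, by omega⟩) = 3) ∨
      (orderOf (ρ ⟨r - 2, by omega⟩ * ρ ⟨r - 1, by omega⟩) = 2 ∧
        ∀ (i : ℕ) (hi3 : i ≤ r - 3),
          orderOf (ρ ⟨i, by omega⟩ * ρ ⟨i + 1, by omega⟩) = 3)) := by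
  subst hr
  have h : Sggi.CentralTwoBlocks ρ b i₀ :=
    { isStringC := hstring
      isPretransitive := htrans
      compat := hcompat
      swap := hswap
      commute := fun i => by
        by_contra hne
        exact (Set.eq_empty_iff_forall_notMem.1 hR) i ⟨fun e => hne (e ▸ Commute.refl _), hne⟩
      two_mul_rank := Nat.two_mul_div_two_of_even hn2
      seven_le := hm7 }
  refine ⟨h.nonempty_mulEquiv, h.eq_zero_or_eq_pred.imp (fun hi₀ => ?_) fun hi₀ => ?_⟩
  · have hfirst : i₀ = ⟨0, by omega⟩ := Fin.ext hi₀
    refine ⟨?_, fun i hi1 hi2 => h.orderOf_mul_eq_three rfl (by grind) (by grind)⟩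
    rw [← hfirst, ← (h.commute _).eq]
    exact h.orderOf_mul_eq_two (by grind)
  · have hlast : i₀ = ⟨n / 2 - 1, by omega⟩ := Fin.ext hi₀
    refine ⟨?_, fun i hi => h.orderOf_mul_eq_three rfl (by grind) (by grind)⟩
    rw [← hlast]
    exact h.orderOf_mul_eq_two (by grind)
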